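/- arXiv:1308.4439 — 3 statements merged into one kernel-verified Lean document; each statement's English description precedes it below -/
import Mathlib

section
/- Let m, r, ñ be integers with ñ ≥ 1, r ≥ 1, m ≥ 0 and m = p·ñ − r. Then for every k ≥ 1 and every tuple (c_1,…,c_k) ∈ (ℤ_{≥0})^k with c_1+⋯+c_k = m, one has ‖π^{r−ñ} · b_{c_1}·b_{c_2}⋯b_{c_k}‖ ≤ 1/p. -/
open scoped BigOperators Classical

namespace AHG

/-- `hat v = (1, v) ∈ ℤ^{n+1}`: coordinate `0` equals `1`, the rest is `v`. -/
def hat {n : ℕ} (v : Fin n → ℤ) : Fin (n + 1) → ℤ := Fin.cons 1 v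

/-- The coefficients `b_i` of the Dwork series
`θ(t) = exp(π(t - t^p)) = exp(πt)·exp(-πt^p) = Σ b_i t^i`;
explicitly `b_i = Σ_{j + p k = i} π^{j+k} (-1)^k / (j! k!)`. -/
noncomputable def dworkB (p : ℕ) {K : Type*} [Field K] (π : K) (i : ℕ) : K :=
  ∑ k ∈ Finset.range (i + 1),
    if p * k ≤ i then
      ((-1 : K) ^ k * π ^ (i - p * k + k)) /
        ((Nat.factorial (i - p * k) : K) * (Nat.factorial k : K))
    else 0

/-- The real cone `C` generated by `â_0, …, â_N`. -/
def cone {n N : ℕ} (a : Fin (N + 1) → Fin n → ℤ) : Set (Fin (n + 1) → ℝ) :=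
  {x | ∃ t : Fin (N + 1) → ℝ, (∀ j, 0 ≤ t j) ∧
      x = ∑ j, t j • fun i => (hat (a j) i : ℝ)}

/-- `M = C ∩ ℤA`. -/
def latticeM {n N : ℕ} (a : Fin (N + 1) → Fin n → ℤ) : Set (Fin (n + 1) → ℤ) :=
  {μ | (fun i => (μ i : ℝ)) ∈ cone a ∧
      μ ∈ AddSubgroup.closure (Set.range fun j => hat (a j))}

/-- `M°`: the elements of `M` lying on no proper (exposed) face of `C`, i.e. every linear
functional nonnegative on `C` and vanishing at `μ` vanishes identically on `C`. -/
def latticeMint {n N : ℕ} (a : Fin (N + 1) → Fin n → ℤ) : Set (Fin (n + 1) → ℤ) :=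
  {μ | μ ∈ latticeM a ∧
      ∀ ℓ : (Fin (n + 1) → ℝ) →ₗ[ℝ] ℝ, (∀ x ∈ cone a, 0 ≤ ℓ x) →
        ℓ (fun i => (μ i : ℝ)) = 0 → ∀ x ∈ cone a, ℓ x = 0}

/-- `a 0` is the unique lattice point interior to `Δ = conv(a 1, …, a N)`. -/
def uniqueInteriorPoint {n N : ℕ} (a : Fin (N + 1) → Fin n → ℤ) : Prop :=
  (fun i => (a 0 i : ℝ)) ∈
      interior (convexHull ℝ (Set.range fun j : Fin N => fun i => (a j.succ i : ℝ))) ∧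
    ∀ v : Fin n → ℤ,
      (fun i => (v i : ℝ)) ∈
          interior (convexHull ℝ (Set.range fun j : Fin N => fun i => (a j.succ i : ℝ))) →
        v = a 0

/-- The set `L_+`, identified with the tuples `(l_1,…,l_N) ∈ ℤ_{≥0}^N` such that
`Σ l_i â_i = (Σ l_i) â_0` (then `l_0 = -Σ l_i`). -/
def LplusSet {n N : ℕ} (a : Fin (N + 1) → Fin n → ℤ) : Set (Fin N → ℕ) :=
  {l | ∑ i : Fin N, l i • hat (a i.succ) = (∑ i : Fin N, l i) • hat (a 0)}

/-- The norm (sup of coefficient norms) of an element of `R`, i.e. of a formal power series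
in the variables `λ_i/λ_0`, `i = 1, …, N`. -/
noncomputable def Rnorm {N : ℕ} {K : Type*} [NormedField K]
    (f : MvPowerSeries (Fin N) K) : ℝ :=
  ⨆ ν : Fin N →₀ ℕ, ‖f ν‖

/-- Membership in `R`: bounded coefficients. -/
def memR {N : ℕ} {K : Type*} [NormedField K] (f : MvPowerSeries (Fin N) K) : Prop :=
  BddAbove (Set.range fun ν : Fin N →₀ ℕ => ‖f ν‖)

/-- Norm-convergence (in the sup norm of `R`) of a series of elements of `R` to `g`. -/
def HasSumR {ι : Type*} {N : ℕ} {K : Type*} [NormedField K]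
    (f : ι → MvPowerSeries (Fin N) K) (g : MvPowerSeries (Fin N) K) : Prop :=
  Filter.Tendsto (fun s : Finset ι => Rnorm (g - ∑ i ∈ s, f i)) Filter.atTop (nhds 0)

/-- Invertibility in `R`. -/
def invR {N : ℕ} {K : Type*} [NormedField K] (f : MvPowerSeries (Fin N) K) : Prop :=
  memR f ∧ ∃ g : MvPowerSeries (Fin N) K, memR g ∧ f * g = 1

/-- `B_μ(1, y_1, …, y_N)` as a power series (in fact a polynomial) in `y_i = λ_i/λ_0`:
the coefficient of `y^ν` is `b_{ν_0} b_{ν_1} ⋯ b_{ν_N}` where `ν_0 = μ_0 - Σ ν_i`,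
whenever `(ν_0, ν_1, …, ν_N)` is a nonnegative solution of `Σ ν_i â_i = μ`, and `0` otherwise. -/
noncomputable def Bone (p : ℕ) {n N : ℕ} (a : Fin (N + 1) → Fin n → ℤ)
    {K : Type*} [Field K] (π : K) (μ : Fin (n + 1) → ℤ) : MvPowerSeries (Fin N) K :=
  fun ν =>
    if 0 ≤ μ 0 - ∑ i : Fin N, (ν i : ℤ) ∧
        (μ 0 - ∑ i : Fin N, (ν i : ℤ)) • hat (a 0) +
          ∑ i : Fin N, (ν i : ℤ) • hat (a i.succ) = μ then
      dworkB p π (μ 0 - ∑ i : Fin N, (ν i : ℤ)).toNat * ∏ i : Fin N, dworkB p π (ν i)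
    else 0

/-- The substitution `λ_i/λ_0 ↦ λ_i^p/λ_0^p` on `R`, i.e. `ξ(λ) ↦ ξ(λ^p)`. -/
noncomputable def frobR (p : ℕ) {N : ℕ} {K : Type*} [Field K]
    (f : MvPowerSeries (Fin N) K) : MvPowerSeries (Fin N) K :=
  fun ν => if h : ∃ ν' : Fin N →₀ ℕ, p • ν' = ν then f h.choose else 0

/-- The term indexed by `ν ∈ M°` in the series defining `η_ρ`:
`π^{ρ_0-ν_0} B_{pν-ρ}(1, λ_1/λ_0, …, λ_N/λ_0) ξ_ν(λ^p)` when `pν - ρ ∈ M`, else `0`. -/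
noncomputable def etaTerm (p : ℕ) {n N : ℕ} (a : Fin (N + 1) → Fin n → ℤ)
    {K : Type*} [Field K] (π : K)
    (ξ : {μ : Fin (n + 1) → ℤ // μ ∈ latticeMint a} → MvPowerSeries (Fin N) K)
    (ρ : Fin (n + 1) → ℤ) (ν : {μ : Fin (n + 1) → ℤ // μ ∈ latticeMint a}) :
    MvPowerSeries (Fin N) K :=
  if (p : ℤ) • ν.1 - ρ ∈ latticeM a then
    π ^ (ρ 0 - ν.1 0) • (Bone p a π ((p : ℤ) • ν.1 - ρ) * frobR p (ξ ν))
  else 0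


/-- The index type `M°` (as a subtype). -/
abbrev Msub {n N : ℕ} (a : Fin (N + 1) → Fin n → ℤ) : Type _ :=
  {μ : Fin (n + 1) → ℤ // μ ∈ latticeMint a}

/-- Membership in `S`: a family `(ξ_μ)_{μ ∈ M°}` of elements of `R` with uniformly
bounded coefficients. -/
def memS {n N : ℕ} (a : Fin (N + 1) → Fin n → ℤ) {K : Type*} [NormedField K]
    (ξ : {μ : Fin (n + 1) → ℤ // μ ∈ latticeMint a} → MvPowerSeries (Fin N) K) : Prop :=
  BddAbove (Set.range
    fun q : {μ : Fin (n + 1) → ℤ // μ ∈ latticeMint a} × (Fin N →₀ ℕ) => ‖ξ q.1 q.2‖)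

/-- The norm on `S`. -/
noncomputable def Snorm {n N : ℕ} (a : Fin (N + 1) → Fin n → ℤ) {K : Type*} [NormedField K]
    (ξ : {μ : Fin (n + 1) → ℤ // μ ∈ latticeMint a} → MvPowerSeries (Fin N) K) : ℝ :=
  ⨆ μ : {μ : Fin (n + 1) → ℤ // μ ∈ latticeMint a}, Rnorm (ξ μ)

/-- The truncation `Φ_1` of `Φ`, as a function of `λ = (λ_0, …, λ_N)`. -/
noncomputable def Phi1 (p : ℕ) {n N : ℕ} (a : Fin (N + 1) → Fin n → ℤ)
    {K : Type*} [Field K] (lam : Fin (N + 1) → K) : K :=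
  ∑ l ∈ (Fintype.piFinset fun _ : Fin N => Finset.range p).filter
      (fun l => l ∈ LplusSet a ∧ ∑ i : Fin N, l i ≤ p - 1),
    (-1 : K) ^ (∑ i : Fin N, l i) * (Nat.multinomial Finset.univ l : K) *
      ∏ i : Fin N, (lam i.succ / lam 0) ^ l i

/-- The open polydisk `𝒟`. -/
def Dopen {N : ℕ} {K : Type*} [NormedField K] : Set (Fin (N + 1) → K) :=
  {lam | lam 0 ≠ 0 ∧ ∀ i : Fin N, ‖lam i.succ / lam 0‖ < 1}

/-- The region `𝒟_+`. -/
def Dplus (p : ℕ) {n N : ℕ} (a : Fin (N + 1) → Fin n → ℤ) {K : Type*} [NormedField K] :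
    Set (Fin (N + 1) → K) :=
  {lam | lam 0 ≠ 0 ∧ (∀ i : Fin N, ‖lam i.succ / lam 0‖ ≤ 1) ∧ ‖Phi1 p a lam‖ = 1}

/-- `f` is (on `𝒟_+`) a rational function of `λ_1/λ_0, …, λ_N/λ_0` defined at every
point of `𝒟_+`. -/
def RatOnDplus (p : ℕ) {n N : ℕ} (a : Fin (N + 1) → Fin n → ℤ) {K : Type*} [NormedField K]
    (f : (Fin (N + 1) → K) → K) : Prop :=
  ∃ q r : MvPolynomial (Fin N) K,
    (∀ lam ∈ Dplus p a (K := K), MvPolynomial.eval (fun i => lam i.succ / lam 0) r ≠ 0) ∧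
    ∀ lam ∈ Dplus p a (K := K),
      f lam = MvPolynomial.eval (fun i => lam i.succ / lam 0) q /
        MvPolynomial.eval (fun i => lam i.succ / lam 0) r

/-- `F` is a uniform limit on `𝒟_+` of rational functions in the `λ_i/λ_0` defined
at every point of `𝒟_+`. -/
def UnifLimitRat (p : ℕ) {n N : ℕ} (a : Fin (N + 1) → Fin n → ℤ) {K : Type*} [NormedField K]
    (F : (Fin (N + 1) → K) → K) : Prop :=
  ∃ u : ℕ → (Fin (N + 1) → K) → K, (∀ k, RatOnDplus p a (u k)) ∧
    TendstoUniformlyOn u F Filter.atTop (Dplus p a (K := K))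

/-- Membership in `R'`: the power series converges on `𝒟` and its sum extends to an
element of `R'`, i.e. to a uniform limit on `𝒟_+` of rational functions in the `λ_i/λ_0`
defined at every point of `𝒟_+`. -/
def memR' (p : ℕ) {n N : ℕ} (a : Fin (N + 1) → Fin n → ℤ) {K : Type*} [NormedField K]
    (c : MvPowerSeries (Fin N) K) : Prop :=
  ∃ F : (Fin (N + 1) → K) → K, UnifLimitRat p a F ∧
    ∀ lam ∈ Dopen (N := N) (K := K),
      HasSum (fun ν : Fin N →₀ ℕ => c ν * ∏ i : Fin N, (lam i.succ / lam 0) ^ ν i) (F lam)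

/-- Invertibility in `R'`. -/
def invR' (p : ℕ) {n N : ℕ} (a : Fin (N + 1) → Fin n → ℤ) {K : Type*} [NormedField K]
    (f : MvPowerSeries (Fin N) K) : Prop :=
  memR' p a f ∧ ∃ g : MvPowerSeries (Fin N) K, memR' p a g ∧ f * g = 1

/-- Membership in `S'`. -/
def memS' (p : ℕ) {n N : ℕ} (a : Fin (N + 1) → Fin n → ℤ) {K : Type*} [NormedField K]
    (ξ : {μ : Fin (n + 1) → ℤ // μ ∈ latticeMint a} → MvPowerSeries (Fin N) K) : Prop :=
  memS a ξ ∧ ∀ μ, memR' p a (ξ μ)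

/-- Membership in `T`: `ξ ∈ S`, `ξ_{â_0} = 1` and `‖ξ‖ = 1`; the distinguished index
`μ0 ∈ M°` is the point `â_0`. -/
def memT {n N : ℕ} (a : Fin (N + 1) → Fin n → ℤ) {K : Type*} [NormedField K]
    (μ0 : {μ : Fin (n + 1) → ℤ // μ ∈ latticeMint a})
    (ξ : {μ : Fin (n + 1) → ℤ // μ ∈ latticeMint a} → MvPowerSeries (Fin N) K) : Prop :=
  memS a ξ ∧ ξ μ0 = 1 ∧ Snorm a ξ = 1

/-- `ζ` is a value of the map `β` at `ξ`: `ζ = α*(ξ)/η_{â_0}`, where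
`α*(ξ) = (η_ρ)_{ρ ∈ M°}` is given by the norm-convergent series of `etaTerm`s. -/
def isBeta (p : ℕ) {n N : ℕ} (a : Fin (N + 1) → Fin n → ℤ) {K : Type*} [NormedField K] (π : K)
    (μ0 : {μ : Fin (n + 1) → ℤ // μ ∈ latticeMint a})
    (ξ ζ : {μ : Fin (n + 1) → ℤ // μ ∈ latticeMint a} → MvPowerSeries (Fin N) K) : Prop :=
  ∃ η : {μ : Fin (n + 1) → ℤ // μ ∈ latticeMint a} → MvPowerSeries (Fin N) K,
    (∀ ρ, HasSumR (etaTerm p a π ξ ρ.1) (η ρ)) ∧ ∀ ρ, ζ ρ = η ρ * (η μ0)⁻¹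

/-- The coefficients `ξ_ρ` (Eq. (3.4) of the paper) of
`ξ(λ,x) = γ°(G(λ_0,x) ∏_{i=1}^N exp(πλ_i x^{â_i}))`:
`ξ_ρ = Σ (-1)^{ρ_0-1+Σl_i} (ρ_0-1+Σl_i)!/(l_1!⋯l_N!) ∏ (λ_i/λ_0)^{l_i}`, summed over
`(l_1,…,l_N) ∈ ℤ_{≥0}^N` such that `l_0 := ρ_0-1+Σl_i ≥ 0` and
`Σ l_i â_i - (l_0+1) â_0 = -ρ`. -/
noncomputable def xiRho {n N : ℕ} (a : Fin (N + 1) → Fin n → ℤ) (K : Type*) [Field K]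
    (ρ : Fin (n + 1) → ℤ) : MvPowerSeries (Fin N) K :=
  fun l =>
    if 0 ≤ ρ 0 - 1 + ∑ i : Fin N, (l i : ℤ) ∧
        (∑ i : Fin N, (l i : ℤ) • hat (a i.succ)) -
          (ρ 0 + ∑ i : Fin N, (l i : ℤ)) • hat (a 0) = -ρ then
      (-1 : K) ^ (ρ 0 - 1 + ∑ i : Fin N, (l i : ℤ)) *
        ((ρ 0 - 1 + ∑ i : Fin N, (l i : ℤ)).toNat.factorial : K) /
        ((∏ i : Fin N, (l i).factorial : ℕ) : K)
    else 0

/-- The series `Φ`, as a formal power series in the variables `λ_i/λ_0`. -/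
noncomputable def PhiSeries {n N : ℕ} (a : Fin (N + 1) → Fin n → ℤ) (K : Type*) [Field K] :
    MvPowerSeries (Fin N) K :=
  fun l =>
    if (fun i => l i) ∈ LplusSet a then
      (-1 : K) ^ (∑ i : Fin N, l i) * (Nat.multinomial Finset.univ l : K)
    else 0

/-- The truncation `Φ_1` of `Φ`, as a formal power series in the variables `λ_i/λ_0`. -/
noncomputable def Phi1Series (p : ℕ) {n N : ℕ} (a : Fin (N + 1) → Fin n → ℤ)
    (K : Type*) [Field K] : MvPowerSeries (Fin N) K :=
  fun l =>
    if (fun i => l i) ∈ LplusSet a ∧ ∑ i : Fin N, l i ≤ p - 1 then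
      (-1 : K) ^ (∑ i : Fin N, l i) * (Nat.multinomial Finset.univ l : K)
    else 0

/-- `B_μ(λ_0, …, λ_N)` as a function of `λ` (a finite sum; `finsum` junk value `0`
is irrelevant since the relevant index set is finite). -/
noncomputable def Bfull (p : ℕ) {n N : ℕ} (a : Fin (N + 1) → Fin n → ℤ)
    {K : Type*} [Field K] (π : K) (μ : Fin (n + 1) → ℤ) (lam : Fin (N + 1) → K) : K :=
  finsum fun ν : Fin (N + 1) → ℕ =>
    if ∑ j, ν j • hat (a j) = μ then
      (∏ j, dworkB p π (ν j)) * ∏ j, lam j ^ ν j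
    else 0

end AHG

open scoped BigOperators Classical


/-- coefficients of `exp(y + y^p/p)` : general term. -/
noncomputable def auxT (p : ℕ) [Fact p.Prime] (n k : ℕ) : ℚ_[p] :=
  if p * k ≤ n then 1 / ((Nat.factorial (n - p * k) : ℚ_[p]) * (Nat.factorial k : ℚ_[p]) * (p : ℚ_[p]) ^ k)
  else 0

noncomputable def auxA (p : ℕ) [Fact p.Prime] (n : ℕ) : ℚ_[p] :=
  ∑ k ∈ Finset.range (n + 1), auxT p n k

theorem auxA_ext (p : ℕ) [hp : Fact p.Prime] (n N : ℕ) (h : n ≤ N) :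
    ∑ k ∈ Finset.range (N + 1), auxT p n k = auxA p n := by
  unfold auxA
  symm
  apply Finset.sum_subset
  · intro x; simp only [Finset.mem_range]; omega
  · intro x _ hx
    simp only [Finset.mem_range] at hx
    have h1 : 1 ≤ p := hp.out.one_le
    have : ¬ (p * x ≤ n) := by nlinarith
    simp [auxT, this]

theorem auxT_rec (p : ℕ) [hp : Fact p.Prime] (n k : ℕ) :
    ((n + 1 : ℕ) : ℚ_[p]) * auxT p (n + 1) (k + 1) = auxT p n (k + 1)
      + (if p ≤ n + 1 then auxT p (n + 1 - p) k else 0) := by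
  have hp0 : (p : ℚ_[p]) ≠ 0 := by exact_mod_cast hp.out.ne_zero
  by_cases h1 : p * (k + 1) ≤ n + 1
  · have h1' : p * k + p ≤ n + 1 := by simpa [mul_add] using h1
    have h2 : p ≤ n + 1 := by omega
    have h3 : p * k ≤ n + 1 - p := by omega
    obtain ⟨j, hj⟩ := Nat.exists_eq_add_of_le h1
    have e1 : n + 1 - p * (k + 1) = j := by omega
    have e2 : n + 1 - p - p * k = j := by rw [mul_add] at hj; omega
    have f1 : (Nat.factorial k : ℚ_[p]) ≠ 0 := by exact_mod_cast Nat.factorial_ne_zero k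
    have f2 : (Nat.factorial j : ℚ_[p]) ≠ 0 := by exact_mod_cast Nat.factorial_ne_zero j
    have f3 : ((k : ℚ_[p]) + 1) ≠ 0 := by exact_mod_cast Nat.succ_ne_zero k
    have hc : ((n + 1 : ℕ) : ℚ_[p]) = p * (k + 1) + j := by rw [hj]; push_cast; ring
    rcases j with _ | j
    · have h4 : ¬ (p * (k + 1) ≤ n) := by omega
      simp only [auxT, h1, h2, h3, h4, if_true, if_false, e1, e2, hc, Nat.factorial_succ]
      push_cast
      field_simp
      simp only [Nat.cast_zero, add_zero]
      ring
    · have h4 : p * (k + 1) ≤ n := by omega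
      have e3 : n - p * (k + 1) = j := by omega
      have f4 : (Nat.factorial j : ℚ_[p]) ≠ 0 := by exact_mod_cast Nat.factorial_ne_zero j
      have f5 : ((j : ℚ_[p]) + 1) ≠ 0 := by exact_mod_cast Nat.succ_ne_zero j
      simp only [auxT, h1, h2, h3, h4, if_true, e1, e2, e3, hc, Nat.factorial_succ]
      push_cast
      field_simp
      ring
  · have h4 : ¬ (p * (k + 1) ≤ n) := by omega
    simp only [auxT, h1, h4, if_false, mul_zero, zero_add]
    split_ifs with h5 h6
    · rw [mul_add] at h1; omega
    · rfl
    · rfl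

theorem auxT_zero (p : ℕ) [hp : Fact p.Prime] (n : ℕ) :
    ((n + 1 : ℕ) : ℚ_[p]) * auxT p (n + 1) 0 = auxT p n 0 := by
  have f4 : (Nat.factorial n : ℚ_[p]) ≠ 0 := by exact_mod_cast Nat.factorial_ne_zero n
  have f5 : ((n : ℚ_[p]) + 1) ≠ 0 := by exact_mod_cast Nat.succ_ne_zero n
  simp [auxT, Nat.factorial_succ]
  field_simp

theorem auxA_rec (p : ℕ) [hp : Fact p.Prime] (n : ℕ) :
    ((n + 1 : ℕ) : ℚ_[p]) * auxA p (n + 1) = auxA p n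
      + (if p ≤ n + 1 then auxA p (n + 1 - p) else 0) := by
  have h1 : 1 ≤ p := hp.out.one_le
  rw [← auxA_ext p n (n + 1) (by omega), auxA, Finset.sum_range_succ', Finset.sum_range_succ' _ (n+1),
    mul_add, auxT_zero, Finset.mul_sum]
  simp only [auxT_rec]
  rw [Finset.sum_add_distrib]
  split_ifs with h
  · rw [auxA_ext p _ n (by omega)]; ring
  · simp

noncomputable def auxX (p : ℕ) [Fact p.Prime] (q s : ℕ) : ℚ_[p] :=
  (Nat.factorial q : ℚ_[p]) * (p : ℚ_[p]) ^ q * auxA p (p * q + s)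

theorem auxX_rec (p : ℕ) [hp : Fact p.Prime] (q s : ℕ) :
    ((p * (q + 1) + (s + 1) : ℕ) : ℚ_[p]) * auxX p (q + 1) (s + 1) = auxX p (q + 1) s +
      p * ((q + 1 : ℕ) : ℚ_[p]) * auxX p q (s + 1) := by
  have h := auxA_rec p (p * (q + 1) + s)
  have h2 : p ≤ p * (q + 1) + s + 1 := by rw [mul_add]; omega
  have e : p * (q + 1) + s + 1 - p = p * q + (s + 1) := by rw [mul_add]; omega
  rw [if_pos h2, e] at h
  simp only [auxX, Nat.factorial_succ, pow_succ, ← add_assoc]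
  simp only [← add_assoc] at h
  push_cast at h ⊢
  linear_combination ((q : ℚ_[p]) + 1) * (Nat.factorial q : ℚ_[p]) * (p : ℚ_[p]) ^ q * p * h

theorem auxX_rec0 (p : ℕ) [hp : Fact p.Prime] (s : ℕ) (hs : s + 1 < p) :
    ((s + 1 : ℕ) : ℚ_[p]) * auxX p 0 (s + 1) = auxX p 0 s := by
  have h := auxA_rec p s
  rw [if_neg (by omega)] at h
  simp only [auxX]
  simpa using h

theorem auxX_step (p : ℕ) [hp : Fact p.Prime] (q : ℕ) :
    auxX p (q + 1) 0 = auxX p q (p - 1) + auxX p q 0 := by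
  have h1 : 1 ≤ p := hp.out.one_le
  have hp0 : (p : ℚ_[p]) ≠ 0 := by exact_mod_cast hp.out.ne_zero
  have h := auxA_rec p (p * q + (p - 1))
  have e : p * q + (p - 1) + 1 = p * (q + 1) := by rw [mul_add]; omega
  rw [e, if_pos (by rw [mul_add]; omega)] at h
  have e2 : p * (q + 1) - p = p * q := by rw [mul_add]; omega
  rw [e2] at h
  simp only [auxX, Nat.factorial_succ, pow_succ, add_zero]
  push_cast at h ⊢
  linear_combination (Nat.factorial q : ℚ_[p]) * (p : ℚ_[p]) ^ q * h

theorem auxX_bound (p : ℕ) [hp : Fact p.Prime] (ρ : ℝ) (hρ : 0 < ρ) (hρ2 : ρ ^ 2 = (p : ℝ)⁻¹)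
    (q : ℕ) : (∀ s, s < p → ‖auxX p q s‖ ≤ ρ ^ q) ∧
      (∀ s, s + 1 < p →
        ‖((s + 1 : ℕ) : ℚ_[p]) * auxX p q (s + 1) - auxX p q s‖ ≤ ρ ^ (q + 1)) := by
  have hp1 : (1 : ℝ) < p := by exact_mod_cast hp.out.one_lt
  have hρ1 : ρ ≤ 1 := by
    have : (p : ℝ)⁻¹ < 1 := inv_lt_one_of_one_lt₀ hp1
    nlinarith
  have hnp : ‖(p : ℚ_[p])‖ = ρ ^ 2 := by rw [hρ2]; exact Padic.norm_p
  have hnat : ∀ n : ℕ, ‖(n : ℚ_[p])‖ ≤ 1 := fun n => by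
    simpa using Padic.norm_int_le_one (p := p) (n : ℤ)
  have hunit : ∀ n s : ℕ, s + 1 < p → ‖((p * n + (s + 1) : ℕ) : ℚ_[p])‖ = 1 := by
    intro n s hs
    rw [Padic.norm_natCast_eq_one_iff, hp.out.coprime_iff_not_dvd]
    rw [Nat.dvd_add_right (Dvd.intro _ rfl)]
    exact Nat.not_dvd_of_pos_of_lt (by omega) hs
  induction q with
  | zero =>
    constructor
    · intro s
      induction s with
      | zero => intro _; simp [auxX, auxA, auxT]
      | succ s ih =>
        intro hs
        have h := congrArg norm (auxX_rec0 p s hs)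
        have hu := hunit 0 s hs
        simp only [mul_zero, zero_add] at hu
        rw [norm_mul, hu, one_mul] at h
        rw [h]; exact ih (by omega)
    · intro s hs
      rw [auxX_rec0 p s hs]; simp [hρ.le]
  | succ q ihq =>
    obtain ⟨ih1, ih2⟩ := ihq
    have hsmall : ∀ (n : ℕ) (y : ℚ_[p]) , ‖y‖ ≤ ρ ^ q →
        ‖(p : ℚ_[p]) * (n : ℚ_[p]) * y‖ ≤ ρ ^ (q + 2) := by
      intro n y hy
      rw [norm_mul, norm_mul, hnp, pow_add, mul_comm (ρ ^ q)]
      have h0 := hnat n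
      have h1 : ρ ^ 2 * ‖(n : ℚ_[p])‖ ≤ ρ ^ 2 := mul_le_of_le_one_right (by positivity) h0
      exact mul_le_mul h1 hy (norm_nonneg _) (by positivity)
    have hle : ρ ^ (q + 2) ≤ ρ ^ (q + 1) := pow_le_pow_of_le_one hρ.le hρ1 (by omega)
    have hle0 : ρ ^ (q + 1) ≤ ρ ^ q := pow_le_pow_of_le_one hρ.le hρ1 (by omega)
    have hfac : ∀ s, s < p →
        ‖(Nat.factorial s : ℚ_[p]) * auxX p q s - auxX p q 0‖ ≤ ρ ^ (q + 1) := by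
      intro s
      induction s with
      | zero => intro _; simp; positivity
      | succ s ih =>
        intro hs
        have e : (Nat.factorial (s + 1) : ℚ_[p]) * auxX p q (s + 1) - auxX p q 0 =
            (Nat.factorial s : ℚ_[p]) * (((s + 1 : ℕ) : ℚ_[p]) * auxX p q (s + 1) - auxX p q s)
            + ((Nat.factorial s : ℚ_[p]) * auxX p q s - auxX p q 0) := by
          rw [Nat.factorial_succ]; push_cast; ring
        rw [e]
        refine (Padic.nonarchimedean _ _).trans (max_le ?_ (ih (by omega)))
        rw [norm_mul]
        exact (mul_le_of_le_one_left (norm_nonneg _) (hnat _)).trans (ih2 s hs)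
    have h0 : ‖auxX p (q + 1) 0‖ ≤ ρ ^ (q + 1) := by
      rw [auxX_step]
      have hw : p ∣ Nat.factorial (p - 1) + 1 := by
        rw [← ZMod.natCast_eq_zero_iff]
        push_cast
        rw [ZMod.wilsons_lemma]; ring
      obtain ⟨d, hd⟩ := hw
      have hd' : (Nat.factorial (p - 1) : ℚ_[p]) + 1 = p * d := by exact_mod_cast hd
      have hpl : p - 1 < p := by have := hp.out.pos; omega
      have e : auxX p q (p - 1) + auxX p q 0 = (p : ℚ_[p]) * (d : ℚ_[p]) * auxX p q (p - 1)
          + -((Nat.factorial (p - 1) : ℚ_[p]) * auxX p q (p - 1) - auxX p q 0) := by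
        rw [← hd']; ring
      rw [e]
      refine (Padic.nonarchimedean _ _).trans (max_le ?_ ?_)
      · exact (hsmall d _ (ih1 _ hpl)).trans hle
      · rw [norm_neg]; exact hfac _ hpl
    have h1 : ∀ s, s < p → ‖auxX p (q + 1) s‖ ≤ ρ ^ (q + 1) := by
      intro s
      induction s with
      | zero => intro _; exact h0
      | succ s ih =>
        intro hs
        have h := congrArg norm (auxX_rec p q s)
        rw [norm_mul, hunit (q + 1) s hs, one_mul] at h
        rw [h]
        exact (Padic.nonarchimedean _ _).trans (max_le (ih (by omega))
          ((hsmall _ _ (ih1 _ hs)).trans hle))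
    refine ⟨h1, ?_⟩
    intro s hs
    have e : ((s + 1 : ℕ) : ℚ_[p]) * auxX p (q + 1) (s + 1) - auxX p (q + 1) s =
        p * ((q + 1 : ℕ) : ℚ_[p]) * auxX p q (s + 1)
        + -(p * ((q + 1 : ℕ) : ℚ_[p]) * auxX p (q + 1) (s + 1)) := by
      have h := auxX_rec p q s
      push_cast at h ⊢
      linear_combination h
    rw [e]
    refine (Padic.nonarchimedean _ _).trans (max_le (hsmall _ _ (ih1 _ hs)) ?_)
    rw [norm_neg]
    exact hsmall _ _ ((h1 _ hs).trans hle0)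

theorem auxA_bound (p : ℕ) [hp : Fact p.Prime] (hp2 : p ≠ 2) (n : ℕ) :
    ‖auxA p n‖ ≤ (p : ℝ) ^ (n / p) := by
  have hp1 : (1 : ℝ) < p := by exact_mod_cast hp.out.one_lt
  have hp3 : 3 ≤ p := by have := hp.out.two_le; omega
  have hp0 : (0 : ℝ) < p := by linarith
  set ρ : ℝ := Real.sqrt ((p : ℝ)⁻¹) with hρdef
  have hρ : 0 < ρ := Real.sqrt_pos.mpr (by positivity)
  have hρ2 : ρ ^ 2 = (p : ℝ)⁻¹ := Real.sq_sqrt (by positivity)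
  have hρ1 : ρ ≤ 1 := by
    have : (p : ℝ)⁻¹ < 1 := inv_lt_one_of_one_lt₀ hp1
    nlinarith
  set q := n / p with hq
  have hn : p * q + n % p = n := Nat.div_add_mod n p
  have hb := (auxX_bound p ρ hρ hρ2 q).1 (n % p) (Nat.mod_lt _ hp.out.pos)
  rw [auxX, hn, norm_mul, norm_mul, norm_pow, Padic.norm_p] at hb
  have hf : ρ ^ q ≤ ‖(Nat.factorial q : ℚ_[p])‖ := by
    rw [Padic.norm_eq_zpow_neg_valuation (by exact_mod_cast Nat.factorial_ne_zero q),
      Padic.valuation_natCast, zpow_neg, zpow_natCast, ← inv_pow, ← hρ2, ← pow_mul]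
    apply pow_le_pow_of_le_one hρ.le hρ1
    have h := sub_one_mul_padicValNat_factorial (p := p) q
    have h2 : 2 * padicValNat p (Nat.factorial q) ≤ (p - 1) * padicValNat p (Nat.factorial q) :=
      Nat.mul_le_mul_right _ (by omega)
    exact h2.trans (h.le.trans (Nat.sub_le _ _))
  have hpos : 0 < ρ ^ q := by positivity
  have h3 : ρ ^ q * ((p : ℝ)⁻¹ ^ q * ‖auxA p n‖) ≤ ρ ^ q * 1 := by
    rw [mul_one]
    refine le_trans ?_ hb
    rw [mul_assoc]
    exact mul_le_mul_of_nonneg_right hf (by positivity)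
  have h4 := le_of_mul_le_mul_left h3 hpos
  rw [inv_pow, inv_mul_le_iff₀ (by positivity), mul_one] at h4
  exact h4

theorem dworkB_eq (p : ℕ) [hp : Fact p.Prime] {K : Type*} [NormedField K]
    (ι : ℚ_[p] →+* K) (π : K) (hπ : π ^ (p - 1) = -(p : K)) (n : ℕ) :
    AHG.dworkB p π n = π ^ n * ι (auxA p n) := by
  unfold AHG.dworkB auxA
  rw [map_sum, Finset.mul_sum]
  apply Finset.sum_congr rfl
  intro k _
  have hp0 : (p : K) ≠ 0 := by
    have : ι (p : ℚ_[p]) ≠ 0 := by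
      rw [Ne, map_eq_zero]; exact_mod_cast hp.out.ne_zero
    simpa using this
  have hpp : 1 ≤ p := hp.out.one_le
  unfold auxT
  split_ifs with h
  · have e : n = (n - p * k + k) + (p - 1) * k := by
      obtain ⟨t, rfl⟩ : ∃ t, p = t + 1 := ⟨p - 1, by omega⟩
      simp only [Nat.add_sub_cancel]
      have : (t + 1) * k = t * k + k := by ring
      omega
    have e2 : π ^ n = π ^ (n - p * k + k) * ((-1) ^ k * (p : K) ^ k) := by
      conv_lhs => rw [e]
      rw [pow_add, pow_mul, hπ, neg_pow]
    rw [e2]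
    simp only [map_div₀, map_mul, map_pow, map_natCast, map_one]
    field_simp
  · simp

theorem stmt_aux (p : ℕ) [hp : Fact p.Prime] (hp2 : p ≠ 2)
    {K : Type*} [NormedField K]
    (ι : ℚ_[p] →+* K) (hι : ∀ x, ‖ι x‖ = ‖x‖)
    (π : K) (hπ : π ^ (p - 1) = -(p : K))
    (m r nt : ℕ) (hr : 1 ≤ r) (hm : (m : ℤ) = p * nt - r)
    (k : ℕ) (c : Fin k → ℕ) (hc : ∑ i, c i = m) :
    ‖π ^ ((r : ℤ) - (nt : ℤ)) * ∏ i, AHG.dworkB p π (c i)‖ ≤ (p : ℝ)⁻¹ := by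
  have hp1 : (1 : ℝ) < p := by exact_mod_cast hp.out.one_lt
  have hp0 : (0 : ℝ) < p := by linarith
  have hpp : 1 ≤ p := hp.out.one_le
  have hnp : ‖(p : K)‖ = (p : ℝ)⁻¹ := by
    have := hι (p : ℚ_[p])
    rwa [map_natCast, Padic.norm_p] at this
  have hnπ : ‖π‖ ^ (p - 1) = (p : ℝ)⁻¹ := by rw [← norm_pow, hπ, norm_neg, hnp]
  have hπ0 : π ≠ 0 := by
    rintro rfl
    have : p - 1 ≠ 0 := by have := hp.out.two_le; omega
    rw [norm_zero, zero_pow this] at hnπ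
    have : (0 : ℝ) < (p : ℝ)⁻¹ := by positivity
    linarith
  have hnπ0 : 0 < ‖π‖ := norm_pos_iff.mpr hπ0
  have hb : ∀ i, ‖AHG.dworkB p π (c i)‖ ≤ ‖π‖ ^ (c i) * (p : ℝ) ^ (c i / p) := by
    intro i
    rw [dworkB_eq p ι π hπ, norm_mul, norm_pow, hι]
    exact mul_le_mul_of_nonneg_left (auxA_bound p hp2 _) (by positivity)
  have hprod : ∏ i, ‖AHG.dworkB p π (c i)‖ ≤ ‖π‖ ^ m * (p : ℝ) ^ (∑ i, c i / p) := by
    refine (Finset.prod_le_prod (fun i _ => norm_nonneg _) (fun i _ => hb i)).trans ?_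
    rw [Finset.prod_mul_distrib, Finset.prod_pow_eq_pow_sum, Finset.prod_pow_eq_pow_sum, hc]
  have hq : ∑ i, c i / p + 1 ≤ nt := by
    have h1 : p * ∑ i, c i / p ≤ m := by
      rw [← hc, Finset.mul_sum]
      exact Finset.sum_le_sum fun i _ => Nat.mul_div_le _ _
    have h2 : m < p * nt := by
      have : (m : ℤ) < ((p * nt : ℕ) : ℤ) := by push_cast; omega
      exact_mod_cast this
    exact Nat.lt_of_mul_lt_mul_left (h1.trans_lt h2)
  rw [norm_mul, norm_prod, norm_zpow]
  have hz : ‖π‖ ^ ((r : ℤ) - (nt : ℤ)) * ‖π‖ ^ m = (p : ℝ)⁻¹ ^ nt := by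
    rw [← hnπ, ← pow_mul, ← zpow_natCast, ← zpow_natCast, ← zpow_add₀ hnπ0.ne']
    congr 1
    push_cast [hpp]
    rw [hm]; ring
  calc ‖π‖ ^ ((r : ℤ) - (nt : ℤ)) * ∏ i, ‖AHG.dworkB p π (c i)‖
      ≤ ‖π‖ ^ ((r : ℤ) - (nt : ℤ)) * (‖π‖ ^ m * (p : ℝ) ^ (∑ i, c i / p)) :=
        mul_le_mul_of_nonneg_left hprod (by positivity)
    _ = (p : ℝ)⁻¹ ^ nt * (p : ℝ) ^ (∑ i, c i / p) := by rw [← mul_assoc, hz]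
    _ ≤ (p : ℝ)⁻¹ := by
        rw [inv_pow, inv_mul_le_iff₀ (by positivity), ← div_eq_mul_inv, le_div_iff₀ hp0, ← pow_succ]
        exact pow_le_pow_right₀ hp1.le hq

/-- if `ñ ≥ 1`, `r ≥ 1`, `m ≥ 0`, `m = pñ - r` and `c_1 + ⋯ + c_k = m`,
then `‖π^{r-ñ} b_{c_1} ⋯ b_{c_k}‖ ≤ 1/p`. -/
theorem stmt_5 (p : ℕ) [Fact p.Prime] (hp2 : p ≠ 2)
    {K : Type*} [NormedField K] [IsUltrametricDist K] [CompleteSpace K] [IsAlgClosed K]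
    (ι : ℚ_[p] →+* K) (hι : ∀ x, ‖ι x‖ = ‖x‖)
    (π : K) (hπ : π ^ (p - 1) = -(p : K))
    (m r nt : ℕ) (hnt : 1 ≤ nt) (hr : 1 ≤ r) (hm : (m : ℤ) = p * nt - r)
    (k : ℕ) (hk : 1 ≤ k) (c : Fin k → ℕ) (hc : ∑ i, c i = m) :
    ‖π ^ ((r : ℤ) - (nt : ℤ)) * ∏ i, AHG.dworkB p π (c i)‖ ≤ (p : ℝ)⁻¹ := by
  exact stmt_aux p hp2 ι hι π hπ m r nt hr hm k c hc
end

section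
/- There exists a constant C ∈ (0,1), depending only on p, with the following property: for all integers m, r, ñ with ñ ≥ 2, r ≥ 1, m ≥ 0 and m = p·ñ − r, and for every k ≥ 1 and every tuple (c_1,…,c_k) ∈ (ℤ_{≥0})^k with c_1+⋯+c_k = m, one has ‖π^{r−ñ} · b_{c_1}·b_{c_2}⋯b_{c_k}‖ ≤ C·(1/p). -/
open scoped BigOperators Classical

open scoped BigOperators Classical


namespace DW
open PowerSeries

lemma ode_unique {K : Type*} [Field K] [CharZero K] {Y Z A B : K⟦X⟧} (N : ℕ)
    (hY : d⁄dX K Y = A * Y) (hZ : d⁄dX K Z = B * Z)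
    (hAB : ∀ n < N, coeff n A = coeff n B) (h0 : coeff 0 Y = coeff 0 Z) :
    ∀ n ≤ N, coeff n Y = coeff n Z := by
  intro n
  induction n using Nat.strong_induction_on with
  | _ n ih =>
    intro hn
    cases n with
    | zero => exact h0
    | succ n =>
      have h1 := congrArg (coeff n) hY
      have h2 := congrArg (coeff n) hZ
      rw [coeff_derivative, coeff_mul] at h1 h2
      have hne : ((n : K) + 1) ≠ 0 := by exact_mod_cast Nat.succ_ne_zero n
      apply mul_right_cancel₀ hne
      rw [h1, h2]
      apply Finset.sum_congr rfl
      intro x hx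
      have hx' := Finset.HasAntidiagonal.mem_antidiagonal.1 hx
      rw [hAB x.1 (by omega), ih x.2 (by omega) (by omega)]

lemma deriv_expand {K : Type*} [Field K] (q : ℕ) (hq : q ≠ 0) (f : K⟦X⟧) :
    d⁄dX K (expand q hq f) = C (q : K) * X ^ (q - 1) * expand q hq (d⁄dX K f) := by
  rw [expand_apply, derivative_subst (HasSubst.X_pow hq), expand_apply, derivative_pow]
  simp
  ring

lemma deriv_rescale {K : Type*} [Field K] (c : K) (f : K⟦X⟧) :
    d⁄dX K (rescale c f) = C c * rescale c (d⁄dX K f) := by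
  ext n
  simp [coeff_derivative, coeff_rescale, pow_succ]
  ring

noncomputable def ex (K : Type*) [Field K] : K⟦X⟧ := mk fun n => ((n.factorial : K))⁻¹

lemma deriv_ex (K : Type*) [Field K] [CharZero K] : d⁄dX K (ex K) = ex K := by
  ext n
  have hne : ((n : K) + 1) ≠ 0 := by exact_mod_cast Nat.succ_ne_zero n
  simp [coeff_derivative, ex, Nat.factorial_succ]
  field_simp

noncomputable def G {K : Type*} [Field K] (q : ℕ) (hq : q ≠ 0) (c : K) : K⟦X⟧ :=
  expand q hq (rescale c (ex K))

lemma deriv_G {K : Type*} [Field K] [CharZero K] (q : ℕ) (hq : q ≠ 0) (c : K) :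
    d⁄dX K (G q hq c) = C (q * c) * X ^ (q - 1) * G q hq c := by
  rw [G, deriv_expand, deriv_rescale, deriv_ex, map_mul, expand_C, map_mul]
  ring

noncomputable def solve {K : Type*} [Field K] (A : K⟦X⟧) : ℕ → K
  | 0 => 1
  | n + 1 => ((n : K) + 1)⁻¹ * ∑ i : Fin (n + 1), coeff (n - i) A * solve A i

lemma solve_spec {K : Type*} [Field K] [CharZero K] (A : K⟦X⟧) :
    d⁄dX K (mk (solve A)) = A * mk (solve A) := by
  ext n
  have hne : ((n : K) + 1) ≠ 0 := by exact_mod_cast Nat.succ_ne_zero n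
  rw [coeff_derivative, mul_comm A, coeff_mul, coeff_mk, solve,
    Finset.Nat.sum_antidiagonal_eq_sum_range_succ_mk, Finset.sum_range]
  field_simp
  apply Finset.sum_congr rfl
  intro i _
  simp [mul_comm]

noncomputable def AA (p : ℕ) (K : Type*) [Field K] : K⟦X⟧ :=
  mk fun n => if ∃ j, n + 1 = p ^ j then 1 else 0

lemma AA_eq (p : ℕ) (hp : 2 ≤ p) (K : Type*) [Field K] :
    AA p K = 1 + X ^ (p - 1) * expand p (by omega) (AA p K) := by
  ext n
  rw [map_add, coeff_X_pow_mul', coeff_expand, coeff_one]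
  simp only [AA, coeff_mk]
  rcases Nat.eq_zero_or_pos n with rfl | hn
  · have : ∃ j, 0 + 1 = p ^ j := ⟨0, by simp⟩
    simp only [this, if_true]
    rw [if_neg (by omega)]
    simp
  · rw [if_neg (show n ≠ 0 by omega), zero_add]
    by_cases h : ∃ j, n + 1 = p ^ j
    · rw [if_pos h]
      obtain ⟨j, hj⟩ := h
      cases j with
      | zero => simp at hj; omega
      | succ j =>
        have h1 : 1 ≤ p ^ j := Nat.one_le_pow _ _ (by omega)
        have h2 : n - (p - 1) = p * (p ^ j - 1) := by
          rw [Nat.mul_sub, ← pow_succ', ← hj]; omega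
        have h3 : p * 1 ≤ p * p ^ j := Nat.mul_le_mul_left _ h1
        rw [← pow_succ', ← hj] at h3
        rw [if_pos (by omega), h2, if_pos (Dvd.intro _ rfl),
          Nat.mul_div_cancel_left _ (by omega), if_pos ⟨j, by omega⟩]
    · rw [if_neg h]
      split_ifs with h1 h2 h3
      · exfalso
        apply h
        obtain ⟨j, hj⟩ := h3
        obtain ⟨k, hk⟩ := h2
        rw [hk, Nat.mul_div_cancel_left _ (by omega)] at hj
        refine ⟨j + 1, ?_⟩
        rw [pow_succ', ← hj, mul_add, ← hk]; omega
      all_goals rfl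

lemma AA_coeff (p : ℕ) (hp : 2 ≤ p) (K : Type*) [Field K] (J n : ℕ) (hn : n + 1 < p ^ J) :
    coeff n (AA p K) = ∑ j ∈ Finset.range J, if n + 1 = p ^ j then (1 : K) else 0 := by
  simp only [AA, coeff_mk]
  by_cases h : ∃ j, n + 1 = p ^ j
  · rw [if_pos h]
    obtain ⟨j, hj⟩ := h
    rw [Finset.sum_eq_single j]
    · simp [hj]
    · intro i _ hij
      rw [if_neg]
      intro h
      exact hij (Nat.pow_right_injective hp (h.symm.trans hj))
    · intro hj'
      exfalso
      rw [Finset.mem_range, not_lt] at hj'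
      have := Nat.pow_le_pow_right (show 0 < p by omega) hj'
      omega
  · rw [if_neg h]
    symm
    apply Finset.sum_eq_zero
    intro j _
    rw [if_neg]
    exact fun h' => h ⟨j, h'⟩

noncomputable def FF (p : ℕ) (K : Type*) [Field K] : K⟦X⟧ := mk (solve (AA p K))

lemma FF_deriv (p : ℕ) (K : Type*) [Field K] [CharZero K] :
    d⁄dX K (FF p K) = AA p K * FF p K := solve_spec _

lemma FF_zero (p : ℕ) (K : Type*) [Field K] : constantCoeff (FF p K) = 1 := by
  rw [← coeff_zero_eq_constantCoeff_apply, FF, coeff_mk, solve]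

lemma FF_pow (p : ℕ) (hp : 2 ≤ p) (K : Type*) [Field K] [CharZero K] :
    FF p K ^ p = expand p (by omega) (FF p K) * rescale (p : K) (ex K) := by
  ext n
  refine ode_unique (A := C (p : K) * AA p K) (B := C (p : K) * AA p K) n ?_ ?_
    (fun _ _ => rfl) ?_ n le_rfl
  · rw [derivative_pow, FF_deriv]
    obtain ⟨q, rfl⟩ : ∃ q, p = q + 1 := ⟨p - 1, by omega⟩
    simp [pow_succ]
    ring
  · rw [Derivation.leibniz, deriv_rescale, deriv_expand, deriv_ex, FF_deriv]
    conv_rhs => rw [AA_eq p hp K]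
    rw [map_mul]
    simp only [smul_eq_mul]
    ring
  · simp [FF_zero, ex]
    rw [← coeff_zero_eq_constantCoeff_apply, coeff_rescale]
    simp


section integrality
variable (p : ℕ) [hpf : Fact p.Prime]

lemma pow_div_factorial (j : ℕ) (hj : j ≠ 0) :
    ‖(p : ℚ_[p]) ^ j * ((j.factorial : ℚ_[p]))⁻¹‖ ≤ (p : ℝ)⁻¹ := by
  have hp1 : (1 : ℝ) < p := by exact_mod_cast hpf.out.one_lt
  have h1 : padicValNat p j.factorial < j := padicValNat_factorial_lt_of_ne_zero p hj
  have hne : (j.factorial : ℚ_[p]) ≠ 0 := by exact_mod_cast Nat.factorial_ne_zero j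
  rw [norm_mul, norm_pow, norm_inv, Padic.norm_p, Padic.norm_eq_zpow_neg_valuation hne,
    Padic.valuation_natCast, ← zpow_neg, neg_neg, zpow_natCast]
  obtain ⟨d, hd⟩ : ∃ d, j = padicValNat p j.factorial + d + 1 := ⟨j - padicValNat p j.factorial - 1, by omega⟩
  generalize padicValNat p j.factorial = v at *
  subst hd
  have hp0 : (p : ℝ) ≠ 0 := by positivity
  have : ((p : ℝ)⁻¹) ^ (v + d + 1) * (p : ℝ) ^ v = ((p : ℝ)⁻¹) ^ d * (p : ℝ)⁻¹ := by
    rw [pow_succ, pow_add]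
    have : ((p : ℝ)⁻¹) ^ v * (p : ℝ) ^ v = 1 := by
      rw [← mul_pow, inv_mul_cancel₀ hp0, one_pow]
    linear_combination ((p : ℝ)⁻¹) ^ d * (p : ℝ)⁻¹ * this
  rw [this]
  have : ((p : ℝ)⁻¹) ^ d ≤ 1 := pow_le_one₀ (by positivity) (inv_le_one_of_one_le₀ hp1.le)
  nlinarith [inv_pos.2 (zero_lt_one.trans hp1)]

lemma frob_congr (f : Polynomial ℤ_[p]) (n : ℕ) :
    ‖(Polynomial.expand ℤ_[p] p f - f ^ p).coeff n‖ ≤ (p : ℝ)⁻¹ := by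
  have h : (PadicInt.toZMod (p := p)) ((Polynomial.expand ℤ_[p] p f - f ^ p).coeff n) = 0 := by
    rw [← Polynomial.coeff_map, Polynomial.map_sub, Polynomial.map_expand, Polynomial.map_pow,
      ZMod.expand_card, sub_self, Polynomial.coeff_zero]
  rw [← RingHom.mem_ker, PadicInt.ker_toZMod, PadicInt.maximalIdeal_eq_span_p] at h
  have h2 := (PadicInt.norm_le_pow_iff_mem_span_pow (p := p)
    ((Polynomial.expand ℤ_[p] p f - f ^ p).coeff n) 1).2 (by simpa using h)
  simpa using h2

lemma FF_int (n : ℕ) : ‖coeff n (FF p ℚ_[p])‖ ≤ 1 := by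
  induction n using Nat.strong_induction_on with
  | _ n ih =>
  rcases Nat.eq_zero_or_pos n with rfl | hn
  · simp [FF_zero]
  have hp1 : (1 : ℝ) < p := by exact_mod_cast hpf.out.one_lt
  have hp2 : 2 ≤ p := hpf.out.two_le
  have hp0 : p ≠ 0 := by omega
  set F := FF p ℚ_[p] with hF
  have hex : ∀ i, ∃ z : ℤ_[p], i < n → (z : ℚ_[p]) = coeff i F := by
    intro i
    by_cases hi : i < n
    · exact ⟨⟨coeff i F, ih i hi⟩, fun _ => rfl⟩
    · exact ⟨0, fun h => absurd h hi⟩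
  choose g hg using hex
  let f : Polynomial ℤ_[p] := ∑ i ∈ Finset.range n, Polynomial.monomial i (g i)
  have hfc : ∀ i, f.coeff i = if i < n then g i else 0 := by
    intro i
    simp only [f, Polynomial.finsetSum_coeff, Polynomial.coeff_monomial]
    simp [Finset.sum_ite_eq']
  let φ : ℤ_[p] →+* ℚ_[p] := PadicInt.Coe.ringHom
  let f' : ℚ_[p]⟦X⟧ := ((f.map φ : Polynomial ℚ_[p]) : ℚ_[p]⟦X⟧)
  have hf' : ∀ i, coeff i f' = if i < n then coeff i F else 0 := by
    intro i
    simp only [f', Polynomial.coeff_coe, Polynomial.coeff_map, hfc]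
    split_ifs with h
    · exact hg i h
    · simp
  -- decomposition
  obtain ⟨R, hR⟩ : X ^ n ∣ F - f' := by
    rw [X_pow_dvd_iff]
    intro m hm
    rw [map_sub, hf', if_pos hm, sub_self]
  have hR0 : coeff 0 R = coeff n F := by
    have := congrArg (coeff n) hR
    rw [map_sub, hf', if_neg (lt_irrefl n), sub_zero, coeff_X_pow_mul', if_pos le_rfl,
      Nat.sub_self] at this
    exact this.symm
  have hF0 : constantCoeff F = 1 := FF_zero p _
  have hf0 : constantCoeff f' = 1 := by
    rw [← coeff_zero_eq_constantCoeff_apply, hf', if_pos hn, coeff_zero_eq_constantCoeff_apply, hF0]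
  have e1 : coeff n (F ^ p) = coeff n (f' ^ p) + p * coeff n F := by
    have h := (Commute.all F f').geom_sum₂_mul p
    rw [hR, mul_comm _ (X ^ n * R), mul_assoc] at h
    have h' := congrArg (coeff n) h
    rw [coeff_X_pow_mul', if_pos le_rfl, Nat.sub_self, coeff_zero_eq_constantCoeff_apply, map_mul,
      ← coeff_zero_eq_constantCoeff_apply, ← coeff_zero_eq_constantCoeff_apply, map_sub, hR0] at h'
    have h'' : coeff 0 (∑ i ∈ Finset.range p, F ^ i * f' ^ (p - 1 - i)) = (p : ℚ_[p]) := by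
      simp [hF0, hf0]
    rw [h''] at h'
    linear_combination -h'
  have e2 : coeff n (f' ^ p) = ((f ^ p).coeff n : ℤ_[p]) := by
    have : f' ^ p = (((f ^ p).map φ : Polynomial ℚ_[p]) : ℚ_[p]⟦X⟧) := by
      simp [f']
    rw [this, Polynomial.coeff_coe, Polynomial.coeff_map]
    rfl
  have e3 : coeff n (expand p hp0 F) = ((Polynomial.expand ℤ_[p] p f).coeff n : ℤ_[p]) := by
    rw [coeff_expand, Polynomial.coeff_expand hpf.out.pos]
    split_ifs with h
    · have hlt : n / p < n := Nat.div_lt_self hn hpf.out.one_lt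
      rw [hfc, if_pos hlt, hg _ hlt]
    · simp
  have e4 : coeff n (F ^ p) = coeff n (expand p hp0 F) +
      ∑ x ∈ (Finset.HasAntidiagonal.antidiagonal n).erase (n, 0),
        coeff x.1 (expand p hp0 F) * coeff x.2 (rescale (p : ℚ_[p]) (ex ℚ_[p])) := by
    rw [hF, FF_pow p hp2, coeff_mul, ← Finset.add_sum_erase _ _
      (show (n, 0) ∈ Finset.HasAntidiagonal.antidiagonal n by simp)]
    congr 1
    rw [coeff_rescale]
    simp [ex]
  have e5 : ‖∑ x ∈ (Finset.HasAntidiagonal.antidiagonal n).erase (n, 0),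
        coeff x.1 (expand p hp0 F) * coeff x.2 (rescale (p : ℚ_[p]) (ex ℚ_[p]))‖ ≤ (p : ℝ)⁻¹ := by
    apply IsUltrametricDist.norm_sum_le_of_forall_le_of_nonneg (by positivity)
    intro x hx
    obtain ⟨hx1, hx2⟩ := Finset.mem_erase.1 hx
    have hx3 := Finset.HasAntidiagonal.mem_antidiagonal.1 hx2
    have hx4 : x.2 ≠ 0 := by
      intro h
      apply hx1
      ext <;> simp <;> omega
    rw [norm_mul, coeff_rescale]
    have h1 := pow_div_factorial p x.2 hx4
    have h2 : ‖coeff x.1 (expand p hp0 F)‖ ≤ 1 := by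
      rw [coeff_expand]
      split_ifs with h
      · exact ih _ (lt_of_le_of_lt (Nat.div_le_self _ _) (by omega))
      · simp
    simp only [ex, coeff_mk]
    calc _ ≤ 1 * (p : ℝ)⁻¹ := mul_le_mul h2 h1 (norm_nonneg _) zero_le_one
      _ = _ := one_mul _
  have e6 := frob_congr p f n
  have e7 : (p : ℚ_[p]) * coeff n F = (((Polynomial.expand ℤ_[p] p f - f ^ p).coeff n : ℤ_[p]) : ℚ_[p]) +
      ∑ x ∈ (Finset.HasAntidiagonal.antidiagonal n).erase (n, 0),
        coeff x.1 (expand p hp0 F) * coeff x.2 (rescale (p : ℚ_[p]) (ex ℚ_[p])) := by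
    rw [Polynomial.coeff_sub, PadicInt.coe_sub, ← e2, ← e3]
    linear_combination e4 - e1
  have e8 : ‖(p : ℚ_[p]) * coeff n F‖ ≤ (p : ℝ)⁻¹ := by
    rw [e7]
    refine (IsUltrametricDist.norm_add_le_max _ _).trans (max_le ?_ e5)
    exact e6
  rw [norm_mul, Padic.norm_p] at e8
  have : (0 : ℝ) < (p : ℝ)⁻¹ := by positivity
  exact le_of_mul_le_mul_left (by simpa using e8) this

end integrality

section bound

/-- coefficient growth class -/
def W {K : Type*} [NormedField K] (τ : ℝ) (f : K⟦X⟧) : Prop := ∀ n, ‖coeff n f‖ ≤ τ ^ n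

lemma W.mul {K : Type*} [NormedField K] [IsUltrametricDist K] {τ : ℝ} (hτ : 0 ≤ τ) {f g : K⟦X⟧}
    (hf : W τ f) (hg : W τ g) : W τ (f * g) := by
  intro n
  rw [coeff_mul]
  apply IsUltrametricDist.norm_sum_le_of_forall_le_of_nonneg (by positivity)
  intro x hx
  rw [← Finset.HasAntidiagonal.mem_antidiagonal.1 hx, norm_mul, pow_add]
  exact mul_le_mul (hf _) (hg _) (norm_nonneg _) (by positivity)

lemma W.one {K : Type*} [NormedField K] {τ : ℝ} (hτ : 0 ≤ τ) : W τ (1 : K⟦X⟧) := by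
  intro n
  rw [coeff_one]
  split_ifs with h
  · simp [h]
  · simp; positivity

lemma W.prod {K : Type*} [NormedField K] [IsUltrametricDist K] {τ : ℝ} (hτ : 0 ≤ τ)
    {α : Type*} (s : Finset α) (f : α → K⟦X⟧) (h : ∀ a ∈ s, W τ (f a)) : W τ (∏ a ∈ s, f a) :=
  Finset.prod_induction f (W τ) (fun _ _ ha hb => W.mul hτ ha hb) (W.one hτ) h

lemma deriv_prod {K : Type*} [Field K] {α : Type*} (s : Finset α) (f A : α → K⟦X⟧)
    (h : ∀ a ∈ s, d⁄dX K (f a) = A a * f a) :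
    d⁄dX K (∏ a ∈ s, f a) = (∑ a ∈ s, A a) * ∏ a ∈ s, f a := by
  induction s using Finset.induction_on with
  | empty => simp
  | insert a s ha ih =>
    rw [Finset.prod_insert ha, Finset.sum_insert ha, Derivation.leibniz, h a (by simp),
      ih (fun b hb => h b (by simp [hb]))]
    simp only [smul_eq_mul]
    ring

lemma theta_eq (p : ℕ) (hp : p ≠ 0) {K : Type*} [Field K] (π : K) :
    (mk (AHG.dworkB p π) : K⟦X⟧) = G p hp (-π) * rescale π (ex K) := by
  ext n
  rw [coeff_mk, coeff_mul, Finset.Nat.sum_antidiagonal_eq_sum_range_succ_mk, AHG.dworkB,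
    ← Finset.sum_filter]
  simp only [G, coeff_expand, coeff_rescale, ex, coeff_mk]
  simp only [ite_mul, zero_mul]
  rw [← Finset.sum_filter]
  refine Finset.sum_bij (fun k _ => p * k) ?_ ?_ ?_ ?_
  · intro k hk
    simp only [Finset.mem_filter, Finset.mem_range] at hk ⊢
    exact ⟨by omega, Dvd.intro _ rfl⟩
  · intro a _ b _ h
    exact Nat.eq_of_mul_eq_mul_left (Nat.pos_of_ne_zero hp) h
  · intro b hb
    simp only [Finset.mem_filter, Finset.mem_range] at hb
    obtain ⟨h1, k, rfl⟩ := hb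
    refine ⟨k, ?_, rfl⟩
    simp only [Finset.mem_filter, Finset.mem_range]
    have : 1 * k ≤ p * k := Nat.mul_le_mul_right _ (Nat.pos_of_ne_zero hp)
    omega
  · intro k _
    rw [Nat.mul_div_cancel_left _ (Nat.pos_of_ne_zero hp), neg_pow, pow_add, div_eq_mul_inv, mul_inv]
    ring

lemma theta_deriv (p : ℕ) (hp : p ≠ 0) {K : Type*} [Field K] [CharZero K] (π : K) :
    d⁄dX K (mk (AHG.dworkB p π)) = (C π + C (p * -π) * X ^ (p - 1)) * mk (AHG.dworkB p π) := by
  rw [theta_eq p hp, Derivation.leibniz, deriv_G, deriv_rescale, deriv_ex]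
  simp only [smul_eq_mul]
  ring

lemma norm_nat (p : ℕ) [hpf : Fact p.Prime] {K : Type*} [NormedField K] (ι : ℚ_[p] →+* K) (hι : ∀ x, ‖ι x‖ = ‖x‖)
    (n : ℕ) : ‖(n : K)‖ = ‖(n : ℚ_[p])‖ := by
  rw [← hι, map_natCast]

lemma norm_p_pow (p : ℕ) (κ : ℝ) (hpκ : (p : ℝ)⁻¹ = κ ^ (p ^ 2 * (p - 1)))
    (v : ℕ) : (p : ℝ) ^ (-(v : ℤ)) = κ ^ (p ^ 2 * ((p - 1) * v)) := by
  rw [zpow_neg, zpow_natCast, ← inv_pow, hpκ, ← pow_mul, mul_assoc]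

lemma norm_fact (p : ℕ) [hpf : Fact p.Prime] {K : Type*} [NormedField K] (ι : ℚ_[p] →+* K) (hι : ∀ x, ‖ι x‖ = ‖x‖) (κ : ℝ) (hκ0 : 0 < κ) (hκ1 : κ < 1) (hpκ : (p : ℝ)⁻¹ = κ ^ (p ^ 2 * (p - 1)))
    (n : ℕ) : κ ^ (p ^ 2 * n) ≤ ‖(n.factorial : K)‖ := by
  have hne : (n.factorial : ℚ_[p]) ≠ 0 := by exact_mod_cast Nat.factorial_ne_zero n
  rw [norm_nat p ι hι, Padic.norm_eq_zpow_neg_valuation hne, Padic.valuation_natCast,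
    norm_p_pow p κ hpκ]
  apply pow_le_pow_of_le_one hκ0.le hκ1.le
  apply Nat.mul_le_mul_left
  rw [sub_one_mul_padicValNat_factorial]
  omega

lemma exp_ineq (q j : ℕ) : (q + 1) ^ (2 + j) * q ^ 2 + (q + 1) ^ 2 * (q * (2 + j) + 1) ≤
    (q + 1) ^ 2 * (q + 1) ^ (2 + j) := by
  have h : 1 + q * j ≤ (q + 1) ^ j := by
    have := one_add_mul_le_pow (a := (q : ℤ)) (by linarith [Int.natCast_nonneg q]) j
    zify
    rw [add_comm (q : ℤ) 1]
    linarith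
  rw [pow_add]
  have : (q + 1) ^ 2 * ((2 * q + 1) * (1 + q * j)) ≤ (q + 1) ^ 2 * ((2 * q + 1) * (q + 1) ^ j) := by
    gcongr
  nlinarith [Nat.zero_le ((q + 1) ^ 2 * (q * j * q))]

lemma G_bound (p : ℕ) [hpf : Fact p.Prime] {K : Type*} [NormedField K] [IsUltrametricDist K] (ι : ℚ_[p] →+* K) (hι : ∀ x, ‖ι x‖ = ‖x‖) (π : K) (κ : ℝ) (hκ0 : 0 < κ) (hκ1 : κ < 1) (hπκ : ‖π‖ = κ ^ (p ^ 2)) (hpκ : (p : ℝ)⁻¹ = κ ^ (p ^ 2 * (p - 1)))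
    (j : ℕ) (hj : 2 ≤ j) (hq : p ^ j ≠ 0) :
    W (κ ^ ((p - 1) ^ 2)) (G (p ^ j) hq (-(π ^ (p ^ j) / (p : K) ^ j))) := by
  have : CharZero K := charZero_of_injective_ringHom ι.injective
  intro n
  rw [G, coeff_expand]
  split_ifs with h
  swap
  · simp; positivity
  obtain ⟨m, rfl⟩ := h
  rw [Nat.mul_div_cancel_left _ (Nat.pos_of_ne_zero hq), coeff_rescale, ex, coeff_mk, norm_mul,
    norm_pow, norm_neg, norm_div, norm_pow, norm_pow, norm_inv, hπκ]
  have hpn : ‖(p : K)‖ = κ ^ (p ^ 2 * (p - 1)) := by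
    rw [norm_nat p ι hι, Padic.norm_p, hpκ]
  rw [hpn, div_pow, ← div_eq_mul_inv, div_div]
  have hf := norm_fact p ι hι κ hκ0 hκ1 hpκ m
  have hf0 : 0 < κ ^ (p ^ 2 * m) := by positivity
  rw [div_le_iff₀ (mul_pos (by positivity) (hf0.trans_le hf))]
  obtain ⟨l, rfl⟩ : ∃ l, j = 2 + l := ⟨j - 2, by omega⟩
  refine le_trans ?_ (mul_le_mul_of_nonneg_left (mul_le_mul_of_nonneg_left hf (by positivity)) (by positivity))
  simp only [← pow_mul, ← pow_add]
  apply pow_le_pow_of_le_one hκ0.le hκ1.le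
  obtain ⟨q, rfl⟩ : ∃ q, p = q + 1 := ⟨p - 1, by have := hpf.out.pos; omega⟩
  have := Nat.mul_le_mul_right m (exp_ineq q l)
  simp only [Nat.add_sub_cancel]
  rw [← pow_add] at this
  refine le_trans (le_of_eq ?_) (this.trans (le_of_eq ?_))
  · ring
  · ring

lemma E_bound (p : ℕ) [hpf : Fact p.Prime] {K : Type*} [NormedField K] (ι : ℚ_[p] →+* K) (hι : ∀ x, ‖ι x‖ = ‖x‖) (π : K) (κ : ℝ) (hκ0 : 0 < κ) (hκ1 : κ < 1) (hπκ : ‖π‖ = κ ^ (p ^ 2))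
    : W (κ ^ ((p - 1) ^ 2)) (rescale π (map ι (FF p ℚ_[p]))) := by
  intro n
  rw [coeff_rescale, coeff_map, norm_mul, hι, norm_pow, hπκ, ← pow_mul, ← pow_mul]
  refine (mul_le_of_le_one_right (by positivity) (FF_int p n)).trans ?_
  apply pow_le_pow_of_le_one hκ0.le hκ1.le
  gcongr
  omega

lemma E_deriv (p : ℕ) [hpf : Fact p.Prime] {K : Type*} [NormedField K] (ι : ℚ_[p] →+* K) (π : K)
    [CharZero K] : d⁄dX K (rescale π (map ι (FF p ℚ_[p]))) =
    C π * rescale π (AA p K) * rescale π (map ι (FF p ℚ_[p])) := by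
  rw [deriv_rescale]
  have : d⁄dX K (map ι (FF p ℚ_[p])) = map ι (d⁄dX ℚ_[p] (FF p ℚ_[p])) := by
    ext n; simp [coeff_derivative]
  have h2 : map ι (AA p ℚ_[p]) = AA p K := by
    ext n
    simp only [AA, coeff_map, coeff_mk]
    split_ifs <;> simp
  rw [this, FF_deriv, map_mul, map_mul, h2, mul_assoc]

lemma dwork_bound (p : ℕ) [hpf : Fact p.Prime] {K : Type*} [NormedField K] [IsUltrametricDist K] (ι : ℚ_[p] →+* K) (hι : ∀ x, ‖ι x‖ = ‖x‖) (π : K) (hπ : π ^ (p - 1) = -(p : K)) (κ : ℝ) (hκ0 : 0 < κ) (hκ1 : κ < 1) (hπκ : ‖π‖ = κ ^ (p ^ 2)) (hpκ : (p : ℝ)⁻¹ = κ ^ (p ^ 2 * (p - 1)))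
    (i : ℕ) : ‖AHG.dworkB p π i‖ ≤ κ ^ ((p - 1) ^ 2 * i) := by
  have : CharZero K := charZero_of_injective_ringHom ι.injective
  have hp0 : p ≠ 0 := hpf.out.ne_zero
  have hp2 := hpf.out.two_le
  have hpK : (p : K) ≠ 0 := by exact_mod_cast hp0
  let J := i + 2
  let A : ℕ → K⟦X⟧ := fun j => C (((p ^ j : ℕ) : K) * (-(π ^ (p ^ j) / (p : K) ^ j))) * X ^ (p ^ j - 1)
  let H : K⟦X⟧ := ∏ j ∈ Finset.Ico 2 J,
    G (p ^ j) (pow_ne_zero j hp0) (-(π ^ (p ^ j) / (p : K) ^ j))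
  have hH : d⁄dX K H = (∑ j ∈ Finset.Ico 2 J, A j) * H :=
    deriv_prod _ _ _ (fun j _ => deriv_G _ _ _)
  set E := rescale π (map ι (FF p ℚ_[p])) with hE
  have hEd := E_deriv p ι π
  rw [← hE] at hEd
  have hEH : d⁄dX K (E * H) = (C π * rescale π (AA p K) + ∑ j ∈ Finset.Ico 2 J, A j) * (E * H) := by
    rw [Derivation.leibniz, hEd, hH]
    simp only [smul_eq_mul]
    ring
  have key := ode_unique i (theta_deriv p hp0 π) hEH ?_ ?_ i le_rfl
  · rw [coeff_mk] at key
    rw [key, pow_mul]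
    apply W.mul (by positivity) (E_bound p ι hι π κ hκ0 hκ1 hπκ)
    apply W.prod (by positivity)
    intro j hj
    exact G_bound p ι hι π κ hκ0 hκ1 hπκ hpκ j (Finset.mem_Ico.1 hj).1 _
  · intro n hn
    have hnJ : n + 1 < p ^ J := by
      have : J < p ^ J := Nat.lt_pow_self hp2
      omega
    have hA : ∀ j, coeff n (A j) = - (if n + 1 = p ^ j then π ^ (n + 1) else 0) := by
      intro j
      have h1 : 1 ≤ p ^ j := Nat.one_le_pow _ _ (by omega)
      simp only [A]
      rw [coeff_C_mul, coeff_X_pow]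
      by_cases h : n + 1 = p ^ j
      · rw [if_pos h, if_pos (by omega), h]
        push_cast
        field_simp
      · rw [if_neg h, if_neg (by omega)]; simp
    rw [map_add, map_add, map_sum, Finset.sum_congr rfl (fun j _ => hA j), coeff_C_mul, coeff_C_mul,
      coeff_rescale, AA_coeff p hp2 K J n hnJ, Finset.range_eq_Ico,
      Finset.sum_eq_sum_Ico_succ_bot (by omega), Finset.sum_eq_sum_Ico_succ_bot (by omega),
      Finset.sum_neg_distrib, coeff_C, coeff_X_pow]
    have hs : ∑ j ∈ Finset.Ico (0 + 1 + 1) J, (if n + 1 = p ^ j then π ^ (n + 1) else 0) =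
        π * π ^ n * ∑ j ∈ Finset.Ico (0 + 1 + 1) J, (if n + 1 = p ^ j then (1 : K) else 0) := by
      rw [Finset.mul_sum]
      apply Finset.sum_congr rfl
      intro j _
      rw [pow_succ']
      simp
    have hs' := hs
    norm_num at hs'
    norm_num
    rw [hs']
    have c1 : (if n = 0 then π else 0) = π * π ^ n * (if n = 0 then (1 : K) else 0) := by
      split_ifs with h
      · simp [h]
      · simp
    have c2 : (if n = p - 1 then -(↑p * π) else 0) = π * π ^ n * (if n + 1 = p then (1 : K) else 0) := by
      by_cases h : n + 1 = p
      · rw [if_pos h, if_pos (by omega), show n = p - 1 by omega, hπ]; ring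
      · rw [if_neg h, if_neg (by omega)]; simp
    rw [c1, c2]
    ring
  · rw [coeff_mk]
    have : coeff 0 E = 1 := by
      rw [hE, coeff_rescale, coeff_map, coeff_zero_eq_constantCoeff_apply, FF_zero]; simp
    rw [coeff_zero_eq_constantCoeff_apply] at this
    rw [coeff_zero_eq_constantCoeff_apply, map_mul, this, one_mul, map_prod, Finset.prod_eq_one]
    · simp [AHG.dworkB]
    · intro j _
      rw [G, constantCoeff_expand, ← coeff_zero_eq_constantCoeff_apply, coeff_rescale]
      simp [ex]

end bound

section final

lemma three_coeff {K : Type*} [Field K] [CharZero K] (π : K) (hπ : π ^ 2 = -3) :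
    AHG.dworkB 3 π 0 = 1 ∧ AHG.dworkB 3 π 1 = π ∧ 2 * AHG.dworkB 3 π 2 = π ^ 2 ∧
    2 * AHG.dworkB 3 π 3 = π ^ 3 ∧ 8 * AHG.dworkB 3 π 4 = 3 * π ^ 4 ∧
    40 * AHG.dworkB 3 π 5 = 7 * π ^ 5 ∧ 80 * AHG.dworkB 3 π 6 = 9 * π ^ 6 ∧
    560 * AHG.dworkB 3 π 7 = 39 * π ^ 7 ∧ 4480 * AHG.dworkB 3 π 8 = 137 * π ^ 8 ∧
    4480 * AHG.dworkB 3 π 9 = 641 * π ^ 5 ∧ 44800 * AHG.dworkB 3 π 10 = 3449 * π ^ 6 ∧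
    492800 * AHG.dworkB 3 π 11 = 15779 * π ^ 7 := by
  have h3 : π ^ 3 = -3 * π := by linear_combination π * hπ
  have h4 : π ^ 4 = 9 := by linear_combination (π ^ 2 - 3) * hπ
  have h5 : π ^ 5 = 9 * π := by linear_combination π * h4
  have h6 : π ^ 6 = -27 := by linear_combination π ^ 2 * h4 + 9 * hπ
  have h7 : π ^ 7 = -27 * π := by linear_combination π * h6
  have h8 : π ^ 8 = 81 := by linear_combination (π ^ 4 + 9) * h4
  have h9 : π ^ 9 = 81 * π := by linear_combination π * h8
  have h10 : π ^ 10 = -243 := by linear_combination π ^ 2 * h8 + 81 * hπ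
  have h11 : π ^ 11 = -243 * π := by linear_combination π * h10
  refine ⟨?_, ?_, ?_, ?_, ?_, ?_, ?_, ?_, ?_, ?_, ?_, ?_⟩ <;>
  · simp [AHG.dworkB, Finset.sum_range_succ, Nat.factorial, hπ, h3, h4, h5, h6, h7, h8, h9, h10, h11]
    try ring

variable {K : Type*} [NormedField K]

lemma three_norm (ι : ℚ_[3] →+* K) (hι : ∀ x, ‖ι x‖ = ‖x‖) (b π : K)
    (D : ℕ) (N : ℤ) (e : ℕ) (hD : ¬ 3 ∣ D) (h : (D : K) * b = N * π ^ e) : ‖b‖ ≤ ‖π‖ ^ e := by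
  have h1 : ‖(D : K)‖ = 1 := by
    rw [norm_nat 3 ι hι, Padic.norm_natCast_eq_one_iff]
    exact ((Nat.Prime.coprime_iff_not_dvd Nat.prime_three).2 hD)
  have h2 : ‖(N : K)‖ ≤ 1 := by
    rw [← map_intCast ι, hι]
    exact Padic.norm_int_le_one N
  have h3 := congrArg norm h
  rw [norm_mul, norm_mul, h1, one_mul, norm_pow] at h3
  rw [h3]
  exact mul_le_of_le_one_left (by positivity) h2

lemma three_bound (ι : ℚ_[3] →+* K) (hι : ∀ x, ‖ι x‖ = ‖x‖) (π : K) (hπ : π ^ 2 = -3)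
    (κ : ℝ) (hκ0 : 0 < κ) (hκ1 : κ < 1) (hπκ : ‖π‖ = κ ^ 9) :
    (∀ i ≤ 8, ‖AHG.dworkB 3 π i‖ ≤ κ ^ (6 * i)) ∧ (∀ i ≤ 11, ‖AHG.dworkB 3 π i‖ ≤ κ ^ (5 * i)) := by
  have : CharZero K := charZero_of_injective_ringHom ι.injective
  obtain ⟨h0, h1, h2, h3, h4, h5, h6, h7, h8, h9, h10, h11⟩ := three_coeff π hπ
  have key : ∀ (b : K) (D : ℕ) (N : ℤ) (e f : ℕ), ¬ 3 ∣ D → (D : K) * b = N * π ^ e → f ≤ 9 * e →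
      ‖b‖ ≤ κ ^ f := by
    intro b D N e f hD h hf
    refine (three_norm ι hι b π D N e hD h).trans ?_
    rw [hπκ, ← pow_mul]
    exact pow_le_pow_of_le_one hκ0.le hκ1.le hf
  have A : ∀ i ≤ 8, ‖AHG.dworkB 3 π i‖ ≤ κ ^ (6 * i) := by
    intro i hi
    interval_cases i
    · exact key _ 1 1 0 _ (by norm_num) (by simp [h0]) (by norm_num)
    · exact key _ 1 1 1 _ (by norm_num) (by simp [h1]) (by norm_num)
    · exact key _ 2 1 2 _ (by norm_num) (by simp [h2]) (by norm_num)
    · exact key _ 2 1 3 _ (by norm_num) (by simp [h3]) (by norm_num)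
    · exact key _ 8 3 4 _ (by norm_num) (by simp [h4]) (by norm_num)
    · exact key _ 40 7 5 _ (by norm_num) (by simp [h5]) (by norm_num)
    · exact key _ 80 9 6 _ (by norm_num) (by simp [h6]) (by norm_num)
    · exact key _ 560 39 7 _ (by norm_num) (by simp [h7]) (by norm_num)
    · exact key _ 4480 137 8 _ (by norm_num) (by simp [h8]) (by norm_num)
  refine ⟨A, ?_⟩
  intro i hi
  by_cases h : i ≤ 8
  · exact (A i h).trans (pow_le_pow_of_le_one hκ0.le hκ1.le (by omega))
  · obtain rfl | rfl | rfl : i = 9 ∨ i = 10 ∨ i = 11 := by omega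
    · exact key _ 4480 641 5 _ (by norm_num) (by simp [h9]) (by norm_num)
    · exact key _ 44800 3449 6 _ (by norm_num) (by simp [h10]) (by norm_num)
    · exact key _ 492800 15779 7 _ (by norm_num) (by simp [h11]) (by norm_num)

lemma prod_bound (κ : ℝ) {k : ℕ} (c : Fin k → ℕ) (b : ℕ → K) (s : ℕ)
    (h : ∀ i, ‖b (c i)‖ ≤ κ ^ (s * c i)) : ‖∏ i, b (c i)‖ ≤ κ ^ (s * ∑ i, c i) := by
  rw [norm_prod, Finset.mul_sum, ← Finset.prod_pow_eq_pow_sum]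
  exact Finset.prod_le_prod (fun _ _ => norm_nonneg _) (fun i _ => h i)

lemma finish (κ : ℝ) (hκ0 : 0 < κ) (hκ1 : κ < 1) (π P : K) (a d : ℕ) (z : ℤ) (w : ℕ) (hπκ : ‖π‖ = κ ^ a)
    (hP : ‖P‖ ≤ κ ^ w) (h : (d : ℤ) + 1 ≤ a * z + w) : ‖π ^ z * P‖ ≤ κ * κ ^ d := by
  rw [norm_mul, norm_zpow, hπκ]
  calc _ ≤ (κ ^ a) ^ z * κ ^ w := mul_le_mul_of_nonneg_left hP (by positivity)
    _ = κ ^ ((a : ℤ) * z + w) := by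
      rw [zpow_add₀ hκ0.ne', zpow_mul, zpow_natCast, zpow_natCast]
    _ ≤ κ ^ ((d : ℤ) + 1) := zpow_le_zpow_right_of_le_one₀ hκ0 hκ1.le h
    _ = _ := by rw [zpow_add₀ hκ0.ne', zpow_natCast, zpow_one, mul_comm]

lemma ineq5 (p n r : ℤ) (hp : 5 ≤ p) (hn : 2 ≤ n) (hr : 1 ≤ r) :
    p ^ 2 * (p - 1) + 1 ≤ p ^ 2 * (r - n) + (p - 1) ^ 2 * (p * n - r) := by
  have h1 : 0 ≤ (n - 2) * (p * (p ^ 2 - 3 * p + 1)) := by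
    apply mul_nonneg (by linarith)
    apply mul_nonneg (by linarith)
    nlinarith
  have h2 : 0 ≤ (r - 1) * (2 * p - 1) := mul_nonneg (by linarith) (by linarith)
  have h3 : 0 ≤ p ^ 3 - 5 * p ^ 2 + 4 * p - 2 := by
    have : 0 ≤ p ^ 2 * (p - 5) := mul_nonneg (by positivity) (by linarith)
    nlinarith
  nlinarith

end final

end DW

/-- there is a constant `C ∈ (0,1)` depending only on `p` such that if
`ñ ≥ 2`, `r ≥ 1`, `m ≥ 0`, `m = pñ - r` and `c_1 + ⋯ + c_k = m`, then
`‖π^{r-ñ} b_{c_1} ⋯ b_{c_k}‖ ≤ C·(1/p)`. -/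
theorem stmt_6 (p : ℕ) [Fact p.Prime] (hp2 : p ≠ 2) :
    ∃ C : ℝ, 0 < C ∧ C < 1 ∧
      ∀ (K : Type*) [NormedField K] [IsUltrametricDist K] [CompleteSpace K] [IsAlgClosed K],
        ∀ (ι : ℚ_[p] →+* K), (∀ x, ‖ι x‖ = ‖x‖) →
        ∀ π : K, π ^ (p - 1) = -(p : K) →
        ∀ m r nt : ℕ, 2 ≤ nt → 1 ≤ r → (m : ℤ) = p * nt - r →
        ∀ k : ℕ, 1 ≤ k → ∀ c : Fin k → ℕ, (∑ i, c i) = m →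
        ‖π ^ ((r : ℤ) - (nt : ℤ)) * ∏ i, AHG.dworkB p π (c i)‖ ≤ C * (p : ℝ)⁻¹ := by
  have hp3 : 3 ≤ p := by
    have := (Fact.out : p.Prime).two_le
    omega
  have hp1 : (1 : ℝ) < p := by exact_mod_cast (by omega : 1 < p)
  have hd : p ^ 2 * (p - 1) ≠ 0 := mul_ne_zero (by positivity) (by omega)
  have hinv0 : (0 : ℝ) < (p : ℝ)⁻¹ := by positivity
  obtain ⟨κ, hκ0, hpκ'⟩ : ∃ κ : ℝ, 0 < κ ∧ κ ^ (p ^ 2 * (p - 1)) = (p : ℝ)⁻¹ :=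
    ⟨((p : ℝ)⁻¹) ^ ((((p ^ 2 * (p - 1) : ℕ) : ℝ))⁻¹), by positivity,
      Real.rpow_inv_natCast_pow hinv0.le hd⟩
  have hpκ := hpκ'.symm
  have hκ1 : κ < 1 := by
    by_contra h
    have h1 := one_le_pow₀ (not_lt.1 h) (n := p ^ 2 * (p - 1))
    rw [hpκ'] at h1
    exact absurd h1 (not_le.2 (inv_lt_one_of_one_lt₀ hp1))
  refine ⟨κ, hκ0, hκ1, ?_⟩
  intro K _ _ _ _ ι hι π hπ m r nt hnt hr hm k _ c hc
  have hπκ : ‖π‖ = κ ^ (p ^ 2) := by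
    have h1 : ‖π‖ ^ (p - 1) = (κ ^ (p ^ 2)) ^ (p - 1) := by
      rw [← norm_pow, hπ, norm_neg, DW.norm_nat p ι hι, Padic.norm_p, ← pow_mul, hpκ]
    exact (pow_left_inj₀ (norm_nonneg _) (by positivity) (by omega)).1 h1
  rw [hpκ]
  have hcl : ∀ i, c i ≤ m := fun i => hc ▸ Finset.single_le_sum (fun _ _ => Nat.zero_le _) (Finset.mem_univ i)
  have hgen : ((p ^ 2 * (p - 1) : ℕ) : ℤ) + 1 ≤
      ((p ^ 2 : ℕ) : ℤ) * ((r : ℤ) - nt) + (((p - 1) ^ 2 * m : ℕ) : ℤ) →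
      ‖π ^ ((r : ℤ) - (nt : ℤ)) * ∏ i, AHG.dworkB p π (c i)‖ ≤ κ * κ ^ (p ^ 2 * (p - 1)) := by
    intro h
    refine DW.finish κ hκ0 hκ1 π _ _ _ _ _ hπκ ?_ h
    rw [← hc]
    exact DW.prod_bound κ c _ _ (fun i => DW.dwork_bound p ι hι π hπ κ hκ0 hκ1 hπκ hpκ (c i))
  by_cases h5 : 5 ≤ p
  · apply hgen
    have := DW.ineq5 p nt r (by exact_mod_cast h5) (by exact_mod_cast hnt) (by exact_mod_cast hr)
    rw [← hm] at this
    push_cast [Nat.cast_sub (show 1 ≤ p by omega)]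
    exact this
  have h4 : p ≠ 4 := by
    rintro rfl
    exact absurd (Fact.out : Nat.Prime 4) (by norm_num)
  obtain rfl : p = 3 := by omega
  by_cases hbig : 19 ≤ 3 * nt + 5 * r
  · apply hgen
    push_cast at hm ⊢
    omega
  have hπ2 : π ^ 2 = -3 := by simpa using hπ
  obtain ⟨hA, hB⟩ := DW.three_bound ι hι π hπ2 κ hκ0 hκ1 (by simpa using hπκ)
  by_cases hm8 : m ≤ 8
  · refine DW.finish κ hκ0 hκ1 π _ _ _ _ (6 * m) hπκ ?_ ?_
    · rw [← hc]
      exact DW.prod_bound κ c _ _ (fun i => hA _ ((hcl i).trans hm8))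
    · push_cast at hm ⊢
      omega
  · refine DW.finish κ hκ0 hκ1 π _ _ _ _ (5 * m) hπκ ?_ ?_
    · rw [← hc]
      exact DW.prod_bound κ c _ _ (fun i => hB _ ((hcl i).trans (by push_cast at hm; omega)))
    · push_cast at hm ⊢
      omega
end

section
/- Assume a_0 is the unique point of ℤ^n lying in the interior of Δ, the convex hull of a_1,…,a_N in ℝ^n. Then there exists a constant C ∈ (0,1), depending only on p, such that every ξ ∈ S whose coefficient ξ_{â_0} is zero satisfies ‖α*(ξ)‖ ≤ C·(1/p)·‖ξ‖. -/
open scoped BigOperators Classical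

namespace AHGProof

/-- forward difference -/
def fd (f : ℕ → ℤ) : ℕ → ℤ := fun l => f (l + 1) - f l

/-- iterated forward difference -/
def Dk : ℕ → (ℕ → ℤ) → (ℕ → ℤ)
  | 0, f => f
  | k + 1, f => Dk k (fd f)

/-- filtration on integer-valued sequences -/
def V (p : ℕ) (c : ℕ) (f : ℕ → ℤ) : Prop :=
  ∀ k l, (p : ℤ) ^ ((c + k + 1) / 2) ∣ Dk k f l

theorem fd_add (f g : ℕ → ℤ) : fd (fun l => f l + g l) = fun l => fd f l + fd g l := by
  funext l; simp only [fd]; ring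

theorem Dk_add (k : ℕ) : ∀ (f g : ℕ → ℤ),
    Dk k (fun l => f l + g l) = fun l => Dk k f l + Dk k g l := by
  induction k with
  | zero => intro f g; rfl
  | succ k ih => intro f g; simp only [Dk]; rw [fd_add, ih]

theorem Dk_neg (k : ℕ) : ∀ (f : ℕ → ℤ),
    Dk k (fun l => - f l) = fun l => - Dk k f l := by
  induction k with
  | zero => intro f; rfl
  | succ k ih =>
    intro f; simp only [Dk]
    rw [← ih]; congr 1; funext l; simp only [fd]; ring

theorem V_add {p c : ℕ} {f g : ℕ → ℤ} (hf : V p c f) (hg : V p c g) :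
    V p c (fun l => f l + g l) := by
  intro k l; rw [Dk_add]; exact dvd_add (hf k l) (hg k l)

theorem V_neg {p c : ℕ} {f : ℕ → ℤ} (hf : V p c f) : V p c (fun l => - f l) := by
  intro k l; rw [Dk_neg]; exact (dvd_neg).2 (hf k l)

theorem V_mono {p c d : ℕ} (h : d ≤ c) {f : ℕ → ℤ} (hf : V p c f) : V p d f := by
  intro k l
  exact (pow_dvd_pow _ (by omega)).trans (hf k l)

theorem V_fd {p c : ℕ} {f : ℕ → ℤ} (hf : V p c f) : V p (c + 1) (fd f) := by
  intro k l
  have := hf (k + 1) l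
  simp only [Dk] at this
  rwa [show c + 1 + k + 1 = c + (k + 1) + 1 by ring]

theorem V_shift {p c : ℕ} {f : ℕ → ℤ} (hf : V p c f) : V p c (fun l => f (l + 1)) := by
  have h : (fun l => f (l + 1)) = fun l => f l + fd f l := by
    funext l; simp only [fd]; ring
  rw [h]; exact V_add hf (V_mono (Nat.le_succ c) (V_fd hf))

theorem mul_aux (p : ℕ) (k : ℕ) : ∀ (c d : ℕ) (f g : ℕ → ℤ), V p c f → V p d g →
    ∀ l, (p : ℤ) ^ ((c + d + k + 1) / 2) ∣ Dk k (fun l => f l * g l) l := by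
  induction k with
  | zero =>
    intro c d f g hf hg l
    have h1 := hf 0 l
    have h2 := hg 0 l
    have h3 := mul_dvd_mul h1 h2
    rw [← pow_add] at h3
    exact (pow_dvd_pow _ (by omega)).trans h3
  | succ k ih =>
    intro c d f g hf hg l
    have h : fd (fun l => f l * g l) = fun l => fd f l * g l + f (l + 1) * fd g l := by
      funext l; simp only [fd]; ring
    simp only [Dk]
    rw [h, Dk_add k (fun l => fd f l * g l) (fun l => f (l + 1) * fd g l)]
    have h1 := ih (c + 1) d _ _ (V_fd hf) hg l
    have h2 := ih c (d + 1) _ _ (V_shift hf) (V_fd hg) l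
    rw [show c + 1 + d + k + 1 = c + d + (k + 1) + 1 by ring] at h1
    rw [show c + (d + 1) + k + 1 = c + d + (k + 1) + 1 by ring] at h2
    exact dvd_add h1 h2

theorem V_mul {p c d : ℕ} {f g : ℕ → ℤ} (hf : V p c f) (hg : V p d g) :
    V p (c + d) (fun l => f l * g l) := fun k l => mul_aux p k c d f g hf hg l

theorem Dk_zero (k : ℕ) : Dk k (fun _ => 0) = fun _ => 0 := by
  induction k with
  | zero => rfl
  | succ k ih =>
    simp only [Dk]
    have : fd (fun _ => 0) = fun _ => 0 := by funext l; simp [fd]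
    rw [this, ih]

theorem V_const {p c : ℕ} {z : ℤ} (h : (p : ℤ) ^ ((c + 1) / 2) ∣ z) : V p c (fun _ => z) := by
  intro k l
  cases k with
  | zero => exact h
  | succ k =>
    simp only [Dk]
    have : fd (fun _ => z) = fun _ => 0 := by funext l; simp [fd]
    rw [this, Dk_zero]; exact dvd_zero _

theorem V_lin (p : ℕ) (m : ℤ) : V p 1 (fun l => (p : ℤ) * (m - l)) := by
  intro k l
  cases k with
  | zero => simp [Dk]
  | succ k =>
    simp only [Dk]
    have : fd (fun l : ℕ => (p : ℤ) * (m - l)) = fun _ => - (p : ℤ) := by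
      funext l; simp only [fd]; push_cast; ring
    rw [this]
    cases k with
    | zero => simp [Dk]
    | succ k =>
      simp only [Dk]
      have : fd (fun _ => - (p : ℤ)) = fun _ => 0 := by funext l; simp [fd]
      rw [this, Dk_zero]; exact dvd_zero _

/-- a product of linear factors is congruent to a constant modulo `V 1` -/
theorem V_prod (p : ℕ) (m : ℤ) {α : Type} (s : Finset α) (w : α → ℤ) :
    V p 1 (fun l => ∏ j ∈ s, ((p : ℤ) * (m - l) + w j) - ∏ j ∈ s, w j) := by
  classical
  induction s using Finset.induction_on with
  | empty => simpa using V_const (p := p) (c := 1) (z := 0) (dvd_zero _)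
  | insert a s ha ih =>
    have h1 : V p 0 (fun l : ℕ => (p : ℤ) * (m - l) + w a) :=
      V_add (V_mono (Nat.zero_le 1) (V_lin p m)) (V_const (by simp))
    have h2 := V_mul h1 ih
    have h3 : V p 1 (fun l : ℕ => ((p : ℤ) * (m - l)) * ∏ j ∈ s, w j) :=
      V_mul (V_lin p m) (V_const (c := 0) (by simp))
    have h4 := V_add h2 h3
    convert h4 using 2 with l
    rw [Finset.prod_insert ha, Finset.prod_insert ha]; ring

/-- operator `P ↦ P + g · TP` -/
def Dop (g : ℕ → ℤ) (P : ℕ → ℤ) : ℕ → ℤ := fun l => P l + g l * P (l + 1)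

theorem V_Dop {p c : ℕ} {g P : ℕ → ℤ} (hg : V p 1 (fun l => g l + 1)) (hP : V p c P) :
    V p (c + 1) (Dop g P) := by
  have h := V_add (V_neg (V_fd hP)) (by simpa [add_comm] using V_mul hg (V_shift hP))
  convert h using 2 with l
  simp only [Dop, fd]; ring

theorem V_iter {p : ℕ} {g : ℕ → ℤ} (hg : V p 1 (fun l => g l + 1)) (q : ℕ) :
    V p q ((Dop g)^[q] (fun _ => 1)) := by
  induction q with
  | zero => exact V_const (by simp)
  | succ q ih => rw [Function.iterate_succ_apply']; exact V_Dop hg ih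

theorem iter_formula (g : ℕ → ℤ) (q : ℕ) : ∀ l, (Dop g)^[q] (fun _ => 1) l =
    ∑ k ∈ Finset.range (q + 1), (q.choose k : ℤ) * ∏ i ∈ Finset.range k, g (l + i) := by
  induction q with
  | zero => intro l; simp
  | succ q ih =>
    intro l
    rw [Function.iterate_succ_apply', Dop, ih, ih]
    rw [Finset.sum_range_succ' _ (q + 1)]
    have h1 : ∀ k, ((q + 1).choose (k + 1) : ℤ) * ∏ i ∈ Finset.range (k + 1), g (l + i)
        = g l * ((q.choose k : ℤ) * ∏ i ∈ Finset.range k, g (l + 1 + i))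
          + (q.choose (k + 1) : ℤ) * ∏ i ∈ Finset.range (k + 1), g (l + i) := by
      intro k
      have : ∏ i ∈ Finset.range (k + 1), g (l + i)
          = g l * ∏ i ∈ Finset.range k, g (l + 1 + i) := by
        rw [Finset.prod_range_succ', mul_comm, add_zero]
        congr 1
        exact Finset.prod_congr rfl (fun i _ => by rw [add_assoc, add_comm 1 i])
      rw [this, Nat.choose_succ_succ]; push_cast; ring
    rw [Finset.sum_congr rfl (fun k _ => h1 k), Finset.sum_add_distrib, ← Finset.mul_sum]
    have h2 := Finset.sum_range_succ' (fun k => (q.choose k : ℤ) * ∏ i ∈ Finset.range k, g (l + i)) q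
    have h3 := Finset.sum_range_succ
      (fun k => (q.choose (k + 1) : ℤ) * ∏ i ∈ Finset.range (k + 1), g (l + i)) q
    rw [h2, h3]
    simp
    ring

theorem key_dvd {p : ℕ} {g : ℕ → ℤ} (hg : V p 1 (fun l => g l + 1)) (q : ℕ) :
    (p : ℤ) ^ ((q + 1) / 2) ∣
      ∑ k ∈ Finset.range (q + 1), (q.choose k : ℤ) * ∏ i ∈ Finset.range k, g i := by
  have h := V_iter hg q 0 0
  simp only [Dk] at h
  rw [iter_formula] at h
  simpa using h

/-- `G p r l = ∏ (pl+r+1+j)` over `j < p`, omitting the multiple of `p`. -/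
def G (p r : ℕ) (z : ℤ) : ℤ :=
  ∏ j ∈ (Finset.range p).erase (p - 1 - r), ((p : ℤ) * z + (r + 1 + j))

theorem fact_step (p r l : ℕ) (hr : r < p) :
    (((p * (l + 1) + r).factorial : ℕ) : ℤ)
      = ((p * l + r).factorial : ℤ) * ((p : ℤ) * (l + 1) * G p r l) := by
  rw [show p * (l + 1) + r = (p * l + r) + p by ring, ← Nat.factorial_mul_ascFactorial,
    Nat.ascFactorial_eq_prod_range]
  push_cast
  congr 1
  rw [G, ← Finset.mul_prod_erase (Finset.range p) _ (Finset.mem_range.2 (show p - 1 - r < p by omega))]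
  congr 1
  · rw [Nat.sub_sub, Nat.cast_sub (by omega)]; push_cast; ring
  · apply Finset.prod_congr rfl
    intros; ring

theorem fact_formula (p r l : ℕ) (hr : r < p) :
    (((p * l + r).factorial : ℕ) : ℤ)
      = r.factorial * (p : ℤ) ^ l * l.factorial * ∏ i ∈ Finset.range l, G p r i := by
  induction l with
  | zero => simp
  | succ l ih =>
    rw [fact_step p r l hr, ih, Finset.prod_range_succ, Nat.factorial_succ]
    push_cast; ring

theorem G_zero (p r : ℕ) [Fact p.Prime] (hr : r < p) : (p : ℤ) ∣ G p r 0 + 1 := by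
  have hp : p.Prime := Fact.out
  have h := fact_step p r 0 hr
  simp only [mul_zero, zero_add, mul_one, Nat.cast_zero] at h
  have h2 : (((p + r).factorial : ℕ) : ℤ) = p * ((p - 1).factorial : ℤ) *
      ∏ i ∈ Finset.range r, ((p : ℤ) + 1 + i) := by
    rw [← Nat.factorial_mul_ascFactorial, Nat.ascFactorial_eq_prod_range,
      ← Nat.mul_factorial_pred hp.ne_zero]
    push_cast; ring
  rw [h2] at h
  have hp0 : (p : ℤ) ≠ 0 := by exact_mod_cast hp.ne_zero
  have h3 : ((p - 1).factorial : ℤ) * ∏ i ∈ Finset.range r, ((p : ℤ) + 1 + i)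
      = r.factorial * G p r 0 := by
    apply mul_left_cancel₀ hp0; linear_combination h
  have h4 := congrArg (fun z : ℤ => (z : ZMod p)) h3
  push_cast at h4
  rw [ZMod.wilsons_lemma] at h4
  have h5 : ∏ i ∈ Finset.range r, ((p : ZMod p) + 1 + i) = (r.factorial : ZMod p) := by
    rw [← Finset.prod_range_add_one_eq_factorial]
    push_cast
    apply Finset.prod_congr rfl
    intro i _; simp [add_comm]
  rw [h5] at h4
  have h6 : (r.factorial : ZMod p) ≠ 0 := by
    rw [Ne, ZMod.natCast_eq_zero_iff, hp.dvd_factorial]; omega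
  have h7 : ((G p r 0 : ℤ) : ZMod p) = -1 := by
    apply mul_left_cancel₀ h6; rw [← h4]; ring
  rw [← ZMod.intCast_zmod_eq_zero_iff_dvd]
  push_cast; rw [h7]; ring

theorem V_G (p r q : ℕ) [Fact p.Prime] (hr : r < p) :
    V p 1 (fun l => G p r ((q : ℤ) - 1 - l) + 1) := by
  have h1 := V_prod p ((q : ℤ) - 1) ((Finset.range p).erase (p - 1 - r)) (fun j => (r : ℤ) + 1 + j)
  have h2 : V p 1 (fun _ => G p r 0 + 1) := V_const (by simpa using G_zero p r hr)
  convert V_add h1 h2 using 2 with l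
  simp only [G]; simp only [mul_zero, zero_add]; ring

theorem G_dvd (p r q l : ℕ) [Fact p.Prime] (hr : r < p) :
    (p : ℤ) ∣ G p r ((q : ℤ) - 1 - l) + 1 := by
  simpa [Dk] using V_G p r q hr 0 l

end AHGProof

namespace AHGProof

/-- coefficients of `exp(x + x^p/p)` -/
noncomputable def ee (p : ℕ) (K : Type*) [Field K] (n : ℕ) : K :=
  ∑ k ∈ Finset.range (n + 1),
    if p * k ≤ n then
      1 / ((p : K) ^ k * ((Nat.factorial (n - p * k) : K) * (Nat.factorial k : K)))
    else 0

theorem dworkB_eq (p : ℕ) [Fact p.Prime] {K : Type*} [Field K] [CharZero K] (π : K)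
    (hπ : π ^ (p - 1) = -(p : K)) (n : ℕ) :
    AHG.dworkB p π n = π ^ n * ee p K n := by
  have hp : p.Prime := Fact.out
  have hp0 : (p : K) ≠ 0 := by exact_mod_cast hp.ne_zero
  unfold AHG.dworkB ee
  rw [Finset.mul_sum]
  apply Finset.sum_congr rfl
  intro k _
  split_ifs with h
  · have h1 : π ^ n = π ^ (n - p * k + k) * ((-1) ^ k * (p : K) ^ k) := by
      rw [← mul_pow, neg_one_mul, ← hπ, ← pow_mul, ← pow_add]
      congr 1
      obtain ⟨t, rfl⟩ : ∃ t, p = t + 1 := ⟨p - 1, by have := hp.pos; omega⟩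
      have h2 : (t + 1) * k = t * k + k := by ring
      simp only [Nat.add_sub_cancel]
      omega
    have h3 : ((-1 : K) ^ k) * (-1) ^ k = 1 := by
      rw [← mul_pow]; simp
    have hf1 : ((n - p * k).factorial : K) ≠ 0 := by exact_mod_cast Nat.factorial_ne_zero _
    have hf2 : (k.factorial : K) ≠ 0 := by exact_mod_cast Nat.factorial_ne_zero _
    rw [h1]
    field_simp
  · simp

theorem ee_mul (p : ℕ) [Fact p.Prime] (K : Type*) [Field K] [CharZero K] (q r : ℕ) (hr : r < p) :
    ee p K (p * q + r) * ((p : K) ^ q * (q.factorial : K) *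
        ((r.factorial * ∏ i ∈ Finset.range q, G p r ((q : ℤ) - 1 - i) : ℤ) : K))
      = ((∑ k ∈ Finset.range (q + 1),
          (q.choose k : ℤ) * ∏ i ∈ Finset.range k, G p r ((q : ℤ) - 1 - i) : ℤ) : K) := by
  have hp : p.Prime := Fact.out
  have hp0 : (p : K) ≠ 0 := by exact_mod_cast hp.ne_zero
  have hq : ∀ k, p * k ≤ p * q + r ↔ k ≤ q := by
    intro k
    constructor
    · intro h
      by_contra h2
      have : p * (q + 1) ≤ p * k := Nat.mul_le_mul_left _ (by omega)
      rw [mul_add] at this; omega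
    · intro h
      have := Nat.mul_le_mul_left p h; omega
  have hsum : ee p K (p * q + r) = ∑ k ∈ Finset.range (q + 1),
      1 / ((p : K) ^ k * ((Nat.factorial (p * q + r - p * k) : K) * (Nat.factorial k : K))) := by
    unfold ee
    rw [← Finset.sum_filter]
    apply Finset.sum_congr _ (fun _ _ => rfl)
    ext k
    simp only [Finset.mem_filter, Finset.mem_range, hq]
    have : q ≤ p * q := Nat.le_mul_of_pos_left _ hp.pos
    omega
  rw [hsum, Finset.sum_mul]
  push_cast
  apply Finset.sum_congr rfl
  intro k hk
  have hkq : k ≤ q := by simpa [Nat.lt_succ_iff] using hk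
  obtain ⟨l, rfl⟩ := Nat.exists_eq_add_of_le hkq
  have e1 : p * (k + l) + r - p * k = p * l + r := by
    rw [mul_add]; omega
  rw [e1]
  have e2 := congrArg (fun z : ℤ => (z : K)) (fact_formula p r l hr)
  push_cast at e2
  have e3 : ∏ i ∈ Finset.range (k + l), (G p r (((k + l : ℕ) : ℤ) - 1 - i) : K)
     = (∏ i ∈ Finset.range k, (G p r (((k + l : ℕ) : ℤ) - 1 - i) : K)) *
        ∏ i ∈ Finset.range l, (G p r (i : ℤ) : K) := by
    rw [Finset.prod_range_add]
    congr 1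
    rw [← Finset.prod_range_reflect (fun i : ℕ => (G p r (i : ℤ) : K))]
    apply Finset.prod_congr rfl
    intro i hi
    have : i < l := by simpa using hi
    congr 2
    rw [Nat.sub_sub, Nat.cast_sub (by omega)]; push_cast; ring
  have hc := Nat.add_choose_mul_factorial_mul_factorial k l
  rw [Nat.choose_symm_add.symm] at hc
  have hc' : (((k + l).choose k : ℕ) : K) * k.factorial * l.factorial = (k + l).factorial := by
    exact_mod_cast hc
  have hf1 : ((p * l + r).factorial : K) ≠ 0 := by exact_mod_cast Nat.factorial_ne_zero _
  have hf2 : (k.factorial : K) ≠ 0 := by exact_mod_cast Nat.factorial_ne_zero _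
  push_cast at e3 ⊢
  rw [e3, ← hc', one_div, inv_mul_eq_iff_eq_mul₀ (by positivity), e2, pow_add]
  ring

theorem norm_ee (p : ℕ) [Fact p.Prime] (K : Type*) [NormedField K] [CharZero K]
    (hint : ∀ z : ℤ, ‖(z : K)‖ = ‖(z : ℚ_[p])‖) (n : ℕ) :
    ‖ee p K n * (((n / p).factorial * p ^ ((n / p) / 2) : ℕ) : K)‖ ≤ 1 := by
  have hp : p.Prime := Fact.out
  obtain ⟨q, r, hr, rfl⟩ : ∃ q r, r < p ∧ n = p * q + r :=
    ⟨n / p, n % p, Nat.mod_lt _ hp.pos, (Nat.div_add_mod n p).symm⟩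
  have hq : (p * q + r) / p = q := by
    rw [Nat.mul_add_div hp.pos, Nat.div_eq_of_lt hr, add_zero]
  rw [hq]
  have h := congrArg norm (ee_mul p K q r hr)
  have hu : ‖((r.factorial * ∏ i ∈ Finset.range q, G p r ((q : ℤ) - 1 - i) : ℤ) : K)‖ = 1 := by
    rw [hint]
    refine le_antisymm (Padic.norm_int_le_one _) (not_lt.1 fun hlt => ?_)
    rw [Padic.norm_intCast_lt_one_iff] at hlt
    have hpp : Prime (p : ℤ) := Nat.prime_iff_prime_int.1 hp
    rcases hpp.dvd_or_dvd hlt with h1 | h1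
    · have := Int.natCast_dvd_natCast.1 h1
      rw [hp.dvd_factorial] at this; omega
    · obtain ⟨i, _, hi⟩ := (hpp.dvd_finset_prod_iff _).1 h1
      have h2 := (dvd_add_right hi).1 (G_dvd p r q i hr)
      exact hpp.not_dvd_one h2
  have hs := key_dvd (V_G p r q hr) q
  rw [← Padic.norm_int_le_pow_iff_dvd, ← hint] at hs
  rw [← h, norm_mul, norm_mul, hu, mul_one] at hs
  have hpn : ‖(p : K)‖ = (p : ℝ)⁻¹ := by
    have := hint p
    push_cast at this
    rw [this, Padic.norm_p]
  have hpos : (0 : ℝ) < p := by exact_mod_cast hp.pos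
  rw [norm_mul, norm_pow, hpn] at hs
  push_cast
  rw [norm_mul, norm_mul, norm_pow, hpn]
  have hqq : q = (q + 1) / 2 + q / 2 := by omega
  rw [zpow_neg, zpow_natCast] at hs
  generalize hA : ‖ee p K (p * q + r)‖ = A at hs ⊢
  generalize hB : ‖(q.factorial : K)‖ = B at hs ⊢
  have hpow : ((p : ℝ)⁻¹) ^ q = ((p : ℝ) ^ ((q + 1) / 2))⁻¹ * ((p : ℝ)⁻¹) ^ (q / 2) := by
    conv_lhs => rw [hqq]
    rw [pow_add, inv_pow]
  rw [hpow] at hs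
  have hc : (0 : ℝ) < ((p : ℝ) ^ ((q + 1) / 2))⁻¹ := by positivity
  have : ((p : ℝ) ^ ((q + 1) / 2))⁻¹ * (A * (B * ((p : ℝ)⁻¹) ^ (q / 2))) ≤
      ((p : ℝ) ^ ((q + 1) / 2))⁻¹ * 1 := by
    calc _ = A * (((p : ℝ) ^ ((q + 1) / 2))⁻¹ * ((p : ℝ)⁻¹) ^ (q / 2) * B) := by ring
      _ ≤ _ := by rw [mul_one]; exact hs
  exact le_of_mul_le_mul_left this hc

/-- denominators -/
def dd (p q : ℕ) : ℕ := q.factorial * p ^ (q / 2)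

theorem dd_mul (p a b : ℕ) : dd p a * dd p b ∣ dd p (a + b) := by
  unfold dd
  rw [show a.factorial * p ^ (a / 2) * (b.factorial * p ^ (b / 2)) =
    (a.factorial * b.factorial) * p ^ (a / 2 + b / 2) by rw [pow_add]; ring]
  exact mul_dvd_mul (Nat.factorial_mul_factorial_dvd_factorial_add a b)
    (pow_dvd_pow _ (by omega))

theorem dd_mono (p : ℕ) {a b : ℕ} (h : a ≤ b) : dd p a ∣ dd p b :=
  mul_dvd_mul (Nat.factorial_dvd_factorial h) (pow_dvd_pow _ (by omega))

theorem dd_prod (p : ℕ) {α : Type} (s : Finset α) (f : α → ℕ) :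
    ∏ i ∈ s, dd p (f i) ∣ dd p (∑ i ∈ s, f i) := by
  classical
  induction s using Finset.induction_on with
  | empty => simp
  | insert a s ha ih =>
    rw [Finset.prod_insert ha, Finset.sum_insert ha]
    exact (mul_dvd_mul_left _ ih).trans (dd_mul _ _ _)

theorem val_dd (p : ℕ) [Fact p.Prime] (hp2 : p ≠ 2) {m : ℕ} (hm : 1 ≤ m) :
    padicValNat p (dd p m) + 1 ≤ m := by
  have hp : p.Prime := Fact.out
  have h3 : 2 ≤ p - 1 := by
    have := hp.two_le; omega
  unfold dd
  rw [padicValNat.mul (Nat.factorial_ne_zero _) (pow_ne_zero _ hp.ne_zero),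
    padicValNat.prime_pow]
  have h := sub_one_mul_padicValNat_factorial_lt_of_ne_zero p (n := m) (by omega)
  have : 2 * padicValNat p m.factorial < m := lt_of_le_of_lt (Nat.mul_le_mul_right _ h3) h
  omega

theorem norm_prod_ee (p : ℕ) [Fact p.Prime] (hp2 : p ≠ 2) (K : Type*) [NormedField K] [CharZero K]
    (hint : ∀ z : ℤ, ‖(z : K)‖ = ‖(z : ℚ_[p])‖) {α : Type} (s : Finset α) (f : α → ℕ)
    (m : ℕ) (hm : 1 ≤ m) (hsum : ∑ i ∈ s, f i / p ≤ m) :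
    ‖(p : K) ^ (m + 1) * ∏ i ∈ s, ee p K (f i)‖ ≤ (p : ℝ)⁻¹ * (p : ℝ)⁻¹ := by
  have hp : p.Prime := Fact.out
  have hpos : (0 : ℝ) < p := by exact_mod_cast hp.pos
  have hpn : ‖(p : K)‖ = (p : ℝ)⁻¹ := by
    have := hint p
    push_cast at this
    rw [this, Padic.norm_p]
  have h1 : ∏ i ∈ s, dd p (f i / p) ∣ dd p m := (dd_prod p s _).trans (dd_mono p hsum)
  obtain ⟨t, ht⟩ := h1
  have h2 : ‖(∏ i ∈ s, ee p K (f i)) * (dd p m : K)‖ ≤ 1 := by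
    rw [ht]
    push_cast
    rw [← mul_assoc, ← Finset.prod_mul_distrib, norm_mul, norm_prod]
    have ht1 : ‖(t : K)‖ ≤ 1 := by
      have := hint t
      rw [Int.cast_natCast] at this
      rw [this]; exact Padic.norm_int_le_one _
    refine mul_le_one₀ ?_ (norm_nonneg _) ht1
    apply Finset.prod_le_one
    · intros; exact norm_nonneg _
    · intro i _; exact norm_ee p K hint (f i)
  have h3 : ((p : ℝ)⁻¹) ^ (m - 1) ≤ ‖(dd p m : K)‖ := by
    have := hint (dd p m)
    rw [Int.cast_natCast, Int.cast_natCast] at this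
    rw [this]
    have hne : dd p m ≠ 0 := mul_ne_zero (Nat.factorial_ne_zero _) (pow_ne_zero _ hp.ne_zero)
    rw [Padic.norm_eq_zpow_neg_valuation (by exact_mod_cast hne), Padic.valuation_natCast, zpow_neg, zpow_natCast, ← inv_pow]
    have hv := val_dd p hp2 hm
    apply pow_le_pow_of_le_one (by positivity)
    · exact inv_le_one_of_one_le₀ (by exact_mod_cast hp.one_le)
    · omega
  rw [norm_mul] at h2 ⊢
  rw [norm_pow, hpn]
  obtain ⟨w, rfl⟩ : ∃ w, m = w + 1 := ⟨m - 1, by omega⟩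
  simp only [Nat.add_sub_cancel] at h3
  generalize ‖∏ i ∈ s, ee p K (f i)‖ = A at h2 ⊢ 
  have hA : (p : ℝ)⁻¹ ^ w * A ≤ 1 := by
    rcases le_or_gt 0 A with h | h
    · calc _ ≤ ‖(dd p (w + 1) : K)‖ * A := by gcongr
        _ ≤ 1 := by rw [mul_comm]; exact h2
    · have : (p : ℝ)⁻¹ ^ w * A ≤ 0 := mul_nonpos_of_nonneg_of_nonpos (by positivity) h.le
      linarith
  calc (p : ℝ)⁻¹ ^ (w + 1 + 1) * A = ((p : ℝ)⁻¹ * (p : ℝ)⁻¹) * ((p : ℝ)⁻¹ ^ w * A) := by ring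
    _ ≤ ((p : ℝ)⁻¹ * (p : ℝ)⁻¹) * 1 := by gcongr
    _ = _ := mul_one _

end AHGProof

namespace AHGProof

theorem hat_mem_cone {n N : ℕ} (a : Fin (N + 1) → Fin n → ℤ) (j : Fin (N + 1)) :
    (fun i => (AHG.hat (a j) i : ℝ)) ∈ AHG.cone a := by
  refine ⟨fun k => if k = j then 1 else 0, fun k => by dsimp only; split_ifs <;> norm_num, ?_⟩
  simp

theorem nonneg_of_gen {n N : ℕ} (a : Fin (N + 1) → Fin n → ℤ)
    (ℓ : (Fin (n + 1) → ℝ) →ₗ[ℝ] ℝ) (h : ∀ j, 0 ≤ ℓ (fun i => (AHG.hat (a j) i : ℝ))) :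
    ∀ x ∈ AHG.cone a, 0 ≤ ℓ x := by
  rintro x ⟨t, ht, rfl⟩
  rw [map_sum]
  apply Finset.sum_nonneg
  intro j _
  rw [map_smul]
  exact mul_nonneg (ht j) (h j)

theorem one_le_of_mint {n N : ℕ} (a : Fin (N + 1) → Fin n → ℤ) {μ : Fin (n + 1) → ℤ}
    (hμ : μ ∈ AHG.latticeMint a) : 1 ≤ μ 0 := by
  have hgen : ∀ j, (LinearMap.proj (R := ℝ) (φ := fun _ : Fin (n + 1) => ℝ) 0)
      (fun i => (AHG.hat (a j) i : ℝ)) = 1 := by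
    intro j; simp [AHG.hat]
  have hnn := nonneg_of_gen a (LinearMap.proj (R := ℝ) (φ := fun _ : Fin (n + 1) => ℝ) 0)
    (fun j => by rw [hgen]; norm_num)
  have h0 := hnn _ hμ.1.1
  simp only [LinearMap.proj_apply] at h0
  have h1 : 0 ≤ μ 0 := by exact_mod_cast h0
  have h2 : μ 0 ≠ 0 := by
    intro h
    have h3 := hμ.2 _ hnn (by simp [h]) _ (hat_mem_cone a 0)
    rw [hgen] at h3
    norm_num at h3
  omega

theorem eq_hat_of_one {n N : ℕ} (a : Fin (N + 1) → Fin n → ℤ)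
    (ha : AHG.uniqueInteriorPoint a) {μ : Fin (n + 1) → ℤ}
    (hμ : μ ∈ AHG.latticeMint a) (h1 : μ 0 = 1) : μ = AHG.hat (a 0) := by
  set Δ := convexHull ℝ (Set.range fun j : Fin N => fun i => (a j.succ i : ℝ)) with hΔ
  let v : Fin n → ℤ := fun i => μ i.succ
  have hμv : μ = AHG.hat v := by
    funext i
    refine Fin.cases ?_ (fun i => ?_) i
    · simp [AHG.hat, h1]
    · simp [AHG.hat, v]
  by_cases hv : (fun i => (v i : ℝ)) ∈ interior Δ
  · rw [hμv, ha.2 v hv]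
  exfalso
  have hconv : Convex ℝ Δ := convex_convexHull ℝ _
  obtain ⟨f, hf⟩ := geometric_hahn_banach_open_point hconv.interior isOpen_interior hv
  have hf2 : ∀ x ∈ Δ, f x ≤ f (fun i => (v i : ℝ)) := by
    intro x hx
    have hsub : closure (interior Δ) ⊆ {x | f x ≤ f (fun i => (v i : ℝ))} :=
      closure_minimal (fun y hy => (hf y hy).le) (isClosed_le f.continuous continuous_const)
    apply hsub
    rw [hconv.closure_interior_eq_closure_of_nonempty_interior ⟨_, ha.1⟩]
    exact subset_closure hx
  let ℓ : (Fin (n + 1) → ℝ) →ₗ[ℝ] ℝ :=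
    f (fun i => (v i : ℝ)) • (LinearMap.proj (R := ℝ) (φ := fun _ : Fin (n + 1) => ℝ) 0)
      - (f : (Fin n → ℝ) →ₗ[ℝ] ℝ) ∘ₗ (LinearMap.funLeft ℝ ℝ Fin.succ)
  have hℓ : ∀ w : Fin n → ℤ, ℓ (fun i => (AHG.hat w i : ℝ)) =
      f (fun i => (v i : ℝ)) - f (fun i => (w i : ℝ)) := by
    intro w
    have : (LinearMap.funLeft ℝ ℝ Fin.succ) (fun i : Fin (n + 1) => (AHG.hat w i : ℝ))
        = fun i => (w i : ℝ) := by
      funext i; simp [LinearMap.funLeft, AHG.hat]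
    simp only [ℓ, LinearMap.sub_apply, LinearMap.comp_apply, this, LinearMap.smul_apply,
      LinearMap.proj_apply]
    simp [AHG.hat]
  have hnn := nonneg_of_gen a ℓ (by
    intro j
    rw [hℓ]
    refine Fin.cases ?_ (fun j => ?_) j
    · exact sub_nonneg.2 (hf _ ha.1).le
    · exact sub_nonneg.2 (hf2 _ (subset_convexHull ℝ _ ⟨j, rfl⟩)))
  have hz := hμ.2 ℓ hnn (by rw [hμv, hℓ, sub_self]) _ (hat_mem_cone a 0)
  rw [hℓ] at hz
  have := hf _ ha.1
  linarith

theorem norm_Bone (p : ℕ) [Fact p.Prime] (hp2 : p ≠ 2) (K : Type*) [NormedField K] [CharZero K]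
    (hint : ∀ z : ℤ, ‖(z : K)‖ = ‖(z : ℚ_[p])‖) (π : K) (hπ : π ^ (p - 1) = -(p : K))
    {n N : ℕ} (a : Fin (N + 1) → Fin n → ℤ) (ν ρ : Fin (n + 1) → ℤ) (hν : 2 ≤ ν 0)
    (hρ : 1 ≤ ρ 0) (κ : Fin N →₀ ℕ) :
    ‖π ^ (ρ 0 - ν 0) * AHG.Bone p a π ((p : ℤ) • ν - ρ) κ‖ ≤ (p : ℝ)⁻¹ * (p : ℝ)⁻¹ := by
  have hp : p.Prime := Fact.out
  have hp0 : (p : K) ≠ 0 := by exact_mod_cast hp.ne_zero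
  have hπ0 : π ≠ 0 := by
    rintro rfl
    rw [zero_pow (by have := hp.two_le; omega)] at hπ
    exact hp0 (by simpa using hπ.symm)
  unfold AHG.Bone
  split_ifs with h
  · obtain ⟨h0, -⟩ := h
    obtain ⟨κ0, hκ0⟩ := Int.eq_ofNat_of_zero_le h0
    rw [hκ0, Int.toNat_natCast]
    obtain ⟨m, hm⟩ := Int.eq_ofNat_of_zero_le (show 0 ≤ ν 0 - 1 by omega)
    have hν0 : ν 0 = m + 1 := by omega
    have hμ : ((p : ℤ) • ν - ρ) 0 = p * (m + 1) - ρ 0 := by simp [hν0]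
    rw [hμ] at hκ0
    let f : Fin (N + 1) → ℕ := Fin.cons κ0 κ
    have hfs : (((∑ i, f i : ℕ)) : ℤ) = p * (m + 1) - ρ 0 := by
      rw [Fin.sum_univ_succ]
      simp only [f, Fin.cons_zero, Fin.cons_succ]
      push_cast
      linarith
    have hprod : AHG.dworkB p π κ0 * ∏ i, AHG.dworkB p π (κ i)
        = π ^ (∑ i, f i) * ∏ i, ee p K (f i) := by
      rw [← Finset.prod_pow_eq_pow_sum, ← Finset.prod_mul_distrib, Fin.prod_univ_succ]
      simp only [f, Fin.cons_zero, Fin.cons_succ]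
      simp only [dworkB_eq p π hπ]
    have hpow : π ^ (ρ 0 - ν 0) * π ^ (∑ i, f i) = (-1) ^ (m + 1) * (p : K) ^ (m + 1) := by
      rw [← mul_pow, neg_one_mul, ← hπ, ← pow_mul, ← zpow_natCast, ← zpow_natCast,
        ← zpow_add₀ hπ0]
      congr 1
      rw [hfs, hν0]
      push_cast [Nat.cast_sub hp.one_le]
      ring
    rw [hprod, ← mul_assoc, hpow, mul_assoc, norm_mul, norm_pow, norm_neg, norm_one, one_pow,
      one_mul]
    apply norm_prod_ee p hp2 K hint Finset.univ f m (by omega)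
    have h1 : p * ∑ i, f i / p ≤ ∑ i, f i := by
      rw [Finset.mul_sum]
      exact Finset.sum_le_sum fun i _ => Nat.mul_div_le _ _
    by_contra hcon
    have h2 : p * (m + 1) ≤ p * ∑ i, f i / p := Nat.mul_le_mul_left _ (by omega)
    have h3 : ((p * (m + 1) : ℕ) : ℤ) ≤ ((∑ i, f i : ℕ) : ℤ) := by exact_mod_cast h2.trans h1
    rw [hfs] at h3
    push_cast at h3
    linarith
  · rw [mul_zero, norm_zero]; positivity

theorem norm_le_Snorm {n N : ℕ} (a : Fin (N + 1) → Fin n → ℤ) {K : Type*} [NormedField K]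
    (ξ : AHG.Msub a → MvPowerSeries (Fin N) K) (hξ : AHG.memS a ξ) (ν : AHG.Msub a)
    (κ : Fin N →₀ ℕ) : ‖ξ ν κ‖ ≤ AHG.Snorm a ξ := by
  obtain ⟨b, hb⟩ := hξ
  have hb' : ∀ ν κ, ‖ξ ν κ‖ ≤ b := fun ν κ => hb ⟨(ν, κ), rfl⟩
  have h1 : ‖ξ ν κ‖ ≤ AHG.Rnorm (ξ ν) :=
    le_ciSup (f := fun κ => ‖ξ ν κ‖) ⟨b, by rintro _ ⟨κ, rfl⟩; exact hb' _ _⟩ κ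
  have h2 : AHG.Rnorm (ξ ν) ≤ AHG.Snorm a ξ :=
    le_ciSup (f := fun ν => AHG.Rnorm (ξ ν))
      ⟨b, by rintro _ ⟨ν, rfl⟩; exact ciSup_le (fun κ => hb' _ _)⟩ ν
  exact h1.trans h2

theorem frob_bound (p : ℕ) {N : ℕ} {K : Type*} [NormedField K] (f : MvPowerSeries (Fin N) K)
    {B : ℝ} (hB : 0 ≤ B) (h : ∀ κ, ‖f κ‖ ≤ B) (κ : Fin N →₀ ℕ) : ‖AHG.frobR p f κ‖ ≤ B := by
  unfold AHG.frobR
  split_ifs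
  · exact h _
  · simpa using hB

theorem eta_bound (p : ℕ) [Fact p.Prime] (hp2 : p ≠ 2) (K : Type*) [NormedField K]
    [IsUltrametricDist K] [CharZero K]
    (hint : ∀ z : ℤ, ‖(z : K)‖ = ‖(z : ℚ_[p])‖) (π : K) (hπ : π ^ (p - 1) = -(p : K))
    {n N : ℕ} (a : Fin (N + 1) → Fin n → ℤ) (ha : AHG.uniqueInteriorPoint a)
    (μ0 : AHG.Msub a) (hμ0 : μ0.1 = AHG.hat (a 0))
    (ξ : AHG.Msub a → MvPowerSeries (Fin N) K) (hξ : AHG.memS a ξ) (hz : ξ μ0 = 0)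
    (ρ ν : AHG.Msub a) (κ : Fin N →₀ ℕ) :
    ‖AHG.etaTerm p a π ξ ρ.1 ν κ‖ ≤ (p : ℝ)⁻¹ * (p : ℝ)⁻¹ * AHG.Snorm a ξ := by
  have hS : 0 ≤ AHG.Snorm a ξ := (norm_nonneg _).trans (norm_le_Snorm a ξ hξ ν κ)
  have hB : 0 ≤ (p : ℝ)⁻¹ * (p : ℝ)⁻¹ * AHG.Snorm a ξ := by positivity
  unfold AHG.etaTerm
  split_ifs with h
  · change ‖π ^ (ρ.1 0 - ν.1 0) • MvPowerSeries.coeff κ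
      (AHG.Bone p a π ((p : ℤ) • ν.1 - ρ.1) * AHG.frobR p (ξ ν))‖ ≤ _
    rw [MvPowerSeries.coeff_mul, Finset.smul_sum]
    apply IsUltrametricDist.norm_sum_le_of_forall_le_of_nonneg hB
    rintro ⟨κ1, κ2⟩ -
    change ‖π ^ (ρ.1 0 - ν.1 0) * (AHG.Bone p a π ((p : ℤ) • ν.1 - ρ.1) κ1 *
      AHG.frobR p (ξ ν) κ2)‖ ≤ _
    by_cases hν : ν = μ0
    · have : AHG.frobR p (ξ ν) κ2 = 0 := by
        have h0 := frob_bound p (ξ ν) le_rfl (fun κ => by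
          rw [hν, hz]; change ‖(0 : K)‖ ≤ 0; simp) κ2
        simpa using h0
      rw [this]; simpa using hB
    · have hν2 : 2 ≤ ν.1 0 := by
        have h1 := one_le_of_mint a ν.2
        have h2 : ν.1 0 ≠ 1 := fun h1 =>
          hν (Subtype.ext ((eq_hat_of_one a ha ν.2 h1).trans hμ0.symm))
        omega
      rw [← mul_assoc, norm_mul]
      exact mul_le_mul (norm_Bone p hp2 K hint π hπ a ν.1 ρ.1 hν2 (one_le_of_mint a ρ.2) κ1)
        (frob_bound p _ hS (norm_le_Snorm a ξ hξ ν) κ2) (norm_nonneg _) (by positivity)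
  · change ‖(0 : K)‖ ≤ _
    simpa using hB

theorem lim_bound {ι' : Type*} {N : ℕ} {K : Type*} [NormedField K] [IsUltrametricDist K]
    (f : ι' → MvPowerSeries (Fin N) K) (g : MvPowerSeries (Fin N) K) {B b : ℝ} (hB : 0 ≤ B)
    (hf : ∀ i κ, ‖f i κ‖ ≤ B) (hg : ∀ κ, ‖g κ‖ ≤ b) (h : AHG.HasSumR f g) (κ : Fin N →₀ ℕ) :
    ‖g κ‖ ≤ B := by
  have hs : ∀ (s : Finset ι') κ, ‖(∑ i ∈ s, f i) κ‖ ≤ B := by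
    intro s κ
    change ‖MvPowerSeries.coeff κ (∑ i ∈ s, f i)‖ ≤ B
    rw [map_sum]
    exact IsUltrametricDist.norm_sum_le_of_forall_le_of_nonneg hB (fun i _ => hf i κ)
  apply le_of_forall_pos_le_add
  intro ε hε
  obtain ⟨s, hsε⟩ := (h.eventually (gt_mem_nhds hε)).exists
  have h1 : ‖(g - ∑ i ∈ s, f i) κ‖ ≤ AHG.Rnorm (g - ∑ i ∈ s, f i) := by
    refine le_ciSup (f := fun κ => ‖(g - ∑ i ∈ s, f i) κ‖) ⟨b + B, ?_⟩ κ
    rintro _ ⟨κ, rfl⟩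
    exact (norm_sub_le (g κ) ((∑ i ∈ s, f i) κ)).trans (add_le_add (hg κ) (hs s κ))
  have h2 : g κ = (∑ i ∈ s, f i) κ + (g - ∑ i ∈ s, f i) κ := by
    change g κ = (∑ i ∈ s, f i) κ + (g κ - (∑ i ∈ s, f i) κ)
    ring
  rw [h2]
  exact (norm_add_le _ _).trans (add_le_add (hs s κ) (h1.trans hsε.le))

end AHGProof

open scoped BigOperators Classical


/-- if `a_0` is the unique interior lattice point of `Δ`, there is a constant
`C ∈ (0,1)` depending only on `p` such that `‖α*(ξ)‖ ≤ C·(1/p)·‖ξ‖` whenever `ξ ∈ S`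
has `ξ_{â_0} = 0`. -/
theorem stmt_8 (p : ℕ) [Fact p.Prime] (hp2 : p ≠ 2) :
    ∃ C : ℝ, 0 < C ∧ C < 1 ∧
      ∀ (K : Type*) [NormedField K] [IsUltrametricDist K] [CompleteSpace K] [IsAlgClosed K],
        ∀ (ι : ℚ_[p] →+* K), (∀ x, ‖ι x‖ = ‖x‖) →
        ∀ π : K, π ^ (p - 1) = -(p : K) →
        ∀ n N : ℕ, 0 < n → 0 < N → ∀ a : Fin (N + 1) → Fin n → ℤ,
        AHG.uniqueInteriorPoint a →
        ∀ μ0 : AHG.Msub a, μ0.1 = AHG.hat (a 0) →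
        ∀ ξ : AHG.Msub a → MvPowerSeries (Fin N) K, AHG.memS a ξ → ξ μ0 = 0 →
        ∀ η : AHG.Msub a → MvPowerSeries (Fin N) K,
          (∀ ρ : AHG.Msub a, AHG.HasSumR (AHG.etaTerm p a π ξ ρ.1) (η ρ)) →
          AHG.memS a η →
          AHG.Snorm a η ≤ C * ((p : ℝ)⁻¹ * AHG.Snorm a ξ) := by
  have hp : p.Prime := Fact.out
  have hp1 : (1 : ℝ) < p := by exact_mod_cast hp.one_lt
  refine ⟨(p : ℝ)⁻¹, by positivity, inv_lt_one_of_one_lt₀ hp1, ?_⟩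
  intro K _ _ _ _ ι hι π hπ n N _ _ a ha μ0 hμ0 ξ hξ hz η hη hηS
  haveI : CharZero K := charZero_of_injective_ringHom ι.injective
  have hint : ∀ z : ℤ, ‖(z : K)‖ = ‖(z : ℚ_[p])‖ := by
    intro z; rw [← hι, map_intCast]
  have hS : 0 ≤ AHG.Snorm a ξ := (norm_nonneg _).trans (AHGProof.norm_le_Snorm a ξ hξ μ0 0)
  have hB : 0 ≤ (p : ℝ)⁻¹ * (p : ℝ)⁻¹ * AHG.Snorm a ξ := by positivity
  rw [← mul_assoc]
  haveI : Nonempty (AHG.Msub a) := ⟨μ0⟩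
  refine ciSup_le fun ρ => ciSup_le fun κ => ?_
  exact AHGProof.lim_bound _ (η ρ) hB
    (AHGProof.eta_bound p hp2 K hint π hπ a ha μ0 hμ0 ξ hξ hz ρ)
    (AHGProof.norm_le_Snorm a η hηS ρ) (hη ρ) κ
end
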